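/- arXiv:2505.08023 — 3 statements merged into one kernel-verified Lean document; each statement's English description precedes it below -/
import Mathlib

section
/- Let λ > 0 and T > 0, and let r, ℓ : [0,T) × ℝ → ℝ be of class C¹, satisfy the diagonal system ∂ₜr + k(r−ℓ)·∂ₓr = −(λ/2)(r+ℓ) and ∂ₜℓ − k(r−ℓ)·∂ₓℓ = −(λ/2)(r+ℓ) on [0,T) × ℝ, and be bounded together with their first derivatives on [0,t] × ℝ for every t < T. Then for every t ∈ [0,T): sup_{(x,y)∈ℝ²} |r(t,x) + ℓ(t,y)| ≤ sup_{(x,y)∈ℝ²} |r(0,x) + ℓ(0,y)| and sup_{(x,y)∈ℝ²} |r(t,x) − ℓ(t,y)| ≤ sup_{(x,y)∈ℝ²} |r(0,x) − ℓ(0,y)|. -/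
open Real Set Filter MeasureTheory

noncomputable section

/-- `L(u) = (1/2)(u·√(1+u²) + arcsinh u)`, the antiderivative of `Q(ξ) = √(1+ξ²)` with `L 0 = 0`. -/
def Lfun (u : ℝ) : ℝ := (1/2) * (u * Real.sqrt (1 + u^2) + Real.arsinh u)

/-- `û₁(η) = L⁻¹(−η/2)`. -/
def u1hat (η : ℝ) : ℝ := Function.invFun Lfun (-η/2)

/-- `k(η) = √(1 + û₁(η)²)`. -/
def kfun (η : ℝ) : ℝ := Real.sqrt (1 + (u1hat η)^2)

/-- `f(η) = k'(η)/√(k(η))`. -/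
def ffun (η : ℝ) : ℝ := deriv kfun η / Real.sqrt (kfun η)

/-- `A(t) = exp(λ t / 2)`. -/
def Afun (lam t : ℝ) : ℝ := Real.exp (lam * t / 2)

/-!
For `w(t, x, y) = r(t, x) ± ℓ(t, y)` the system becomes one nonlocal transport equation
`∂ₜw + b·∇w = -(α w + β w∘swap)` on `ℝ²`, with `α = λ/2` and `β = ±λ/2`. Subtract from `|w|` a small
multiple of a barrier `C t + φ(x, y)`, where `φ` is coercive, symmetric and has derivative along `b`
bounded by less than `C`; the difference attains its maximum. By symmetry of `φ`, at a maximum point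
`|w∘swap| ≤ |w|`, so `|β| ≤ α` makes the source push `|w|` down, while the barrier grows strictly
along the characteristic direction `(1, b)`. Hence the maximum sits at `t = 0`.
-/

open scoped Topology

section LineDerivative

variable {E : Type*} [NormedAddCommGroup E] [NormedSpace ℝ E]

lemma nonneg_of_hasLineDerivAt_of_eventually_le {f : E → ℝ} {f' : ℝ} {x v : E}
    (hf : HasLineDerivAt ℝ f f' x v) (hmax : ∀ᶠ s in 𝓝[<] (0 : ℝ), f (x + s • v) ≤ f x) :
    0 ≤ f' := by
  refine ge_of_tendsto hf.tendsto_slope_zero_left ?_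
  filter_upwards [hmax, self_mem_nhdsWithin] with s hs hs_neg
  exact mul_nonneg_of_nonpos_of_nonpos (inv_nonpos.2 (le_of_lt hs_neg)) (sub_nonpos.2 hs)

lemma nonneg_of_isMaxOn_Icc_prod_univ {f : ℝ × E → ℝ} {f' T t : ℝ} {z v : E}
    (ht : t ∈ Ioc 0 T) (hmax : IsMaxOn f (Icc 0 T ×ˢ univ) (t, z))
    (hf : HasLineDerivAt ℝ f f' (t, z) (1, v)) : 0 ≤ f' := by
  refine nonneg_of_hasLineDerivAt_of_eventually_le hf ?_
  filter_upwards [Ioo_mem_nhdsLT (neg_lt_zero.2 ht.1)] with s hs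
  refine hmax ⟨⟨?_, ?_⟩, mem_univ _⟩ <;>
    simp only [Prod.fst_add, Prod.smul_fst, smul_eq_mul, mul_one] <;> linarith [hs.1, hs.2, ht.2]

lemma hasLineDerivAt_uncurry {u : ℝ → ℝ → ℝ} {t x : ℝ}
    (hu : DifferentiableAt ℝ (Function.uncurry u) (t, x)) (c : ℝ) :
    HasLineDerivAt ℝ (Function.uncurry u)
      (deriv (fun s => u s x) t + c * deriv (fun y => u t y) x) (t, x) (1, c) := by
  obtain ⟨D, hD⟩ := hu
  have deriv_time : deriv (fun s => u s x) t = D (1, 0) :=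
    (HasFDerivAt.comp_hasDerivAt (f := fun s => (s, x)) t hD
      ((hasDerivAt_id' t).prodMk (hasDerivAt_const t x))).deriv
  have deriv_space : deriv (fun y => u t y) x = D (0, 1) :=
    (HasFDerivAt.comp_hasDerivAt (f := fun y => (t, y)) x hD
      ((hasDerivAt_const x t).prodMk (hasDerivAt_id' x))).deriv
  have direction : ((1, c) : ℝ × ℝ) = (1, 0) + c • (0, 1) := by simp
  have chain_rule : deriv (fun s => u s x) t + c * deriv (fun y => u t y) x = D (1, c) := by
    rw [direction, map_add, map_smul, smul_eq_mul, deriv_time, deriv_space]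
  exact chain_rule ▸ hD.hasLineDerivAt (1, c)

end LineDerivative

section Coercive

variable {X Y : Type*} [TopologicalSpace X] [TopologicalSpace Y]

lemma tendsto_snd_cocompact_inf_principal {s : Set X} (hs : IsCompact s) :
    Tendsto Prod.snd (cocompact (X × Y) ⊓ 𝓟 (s ×ˢ univ)) (cocompact Y) := by
  refine (hasBasis_cocompact.tendsto_right_iff).2 fun k hk => ?_
  filter_upwards [mem_inf_of_left (hs.prod hk).compl_mem_cocompact,
    mem_inf_of_right (mem_principal_self _)] with p hp hps hpk
  exact hp ⟨hps.1, hpk⟩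

lemma exists_isMaxOn_sub_of_tendsto_cocompact {s : Set X} {f : X × Y → ℝ} {φ : Y → ℝ} {M : ℝ}
    [Nonempty Y] (hs : IsCompact s) (hs_closed : IsClosed s) (hs_nonempty : s.Nonempty)
    (hf : ContinuousOn f (s ×ˢ univ)) (hfM : ∀ p ∈ s ×ˢ univ, f p ≤ M)
    (hφ : Continuous φ) (hφ_lim : Tendsto φ (cocompact Y) atTop) :
    ∃ p ∈ s ×ˢ univ, IsMaxOn (fun p => f p - φ p.2) (s ×ˢ univ) p := by
  obtain ⟨x₀, hx₀⟩ := hs_nonempty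
  obtain ⟨y₀⟩ := ‹Nonempty Y›
  refine (hf.sub (hφ.comp continuous_snd).continuousOn).exists_isMaxOn'
    (hs_closed.prod isClosed_univ) (x₀ := (x₀, y₀)) ⟨hx₀, mem_univ _⟩ ?_
  filter_upwards [(hφ_lim.comp (tendsto_snd_cocompact_inf_principal hs)).eventually_ge_atTop
    (M - (f (x₀, y₀) - φ y₀)), mem_inf_of_right (mem_principal_self _)] with p hp hps
  simp only [Function.comp_apply] at hp
  simp only [Pi.sub_apply, Function.comp_apply]
  linarith [hfM p hps]

end Coercive

section MaximumPrinciple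

variable {E : Type*} [NormedAddCommGroup E] [NormedSpace ℝ E]
  {T C K M S₀ : ℝ} {α β : ℝ → ℝ} {σ : E → E} {b : ℝ → E → E} {w : ℝ → E → ℝ} {φ : E → ℝ}

lemma mul_add_nonneg_of_abs_le {sgn a b x y : ℝ} (hsgn : |sgn| = 1) (hsgn_mul : sgn * x = |x|)
    (hba : |b| ≤ a) (hyx : |y| ≤ |x|) : 0 ≤ sgn * (a * x + b * y) := by
  have ha : 0 ≤ a := (abs_nonneg b).trans hba
  have coupling : |sgn * (b * y)| ≤ a * |x| := by
    rw [abs_mul, abs_mul, hsgn, one_mul]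
    gcongr
  calc 0 ≤ a * |x| + sgn * (b * y) := by linarith [neg_le_of_abs_le coupling]
    _ = sgn * (a * x + b * y) := by rw [← hsgn_mul]; ring

lemma not_isMaxOn_abs_sub_barrier {t : ℝ} {z : E} (ht : t ∈ Ioc 0 T)
    (hφ : DifferentiableAt ℝ φ z) (hφσ : φ (σ z) ≤ φ z)
    (hb : |fderiv ℝ φ z (b t z)| < C) (hβα : |β t| ≤ α t)
    (heq : HasLineDerivAt ℝ (Function.uncurry w) (-(α t * w t z + β t * w t (σ z)))
      (t, z) (1, b t z)) :
    ¬ IsMaxOn (fun p : ℝ × E => |w p.1 p.2| - C * p.1 - φ p.2) (Icc 0 T ×ˢ univ) (t, z) := by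
  intro hmax
  obtain ⟨sgn, hsgn, hsgn_mul⟩ : ∃ sgn : ℝ, |sgn| = 1 ∧ sgn * w t z = |w t z| := by
    rcases abs_choice (w t z) with h | h
    · exact ⟨1, abs_one, by rw [h, one_mul]⟩
    · exact ⟨-1, by rw [abs_neg, abs_one], by rw [h, neg_one_mul]⟩
  have hsgn_le (a : ℝ) : sgn * a ≤ |a| := (le_abs_self _).trans_eq (by rw [abs_mul, hsgn, one_mul])
  -- Freezing the sign keeps the maximum and removes the kink of `|w|`.
  have smooth_max : IsMaxOn (fun p : ℝ × E => sgn * w p.1 p.2 - C * p.1 - φ p.2)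
      (Icc 0 T ×ˢ univ) (t, z) := by
    refine fun p hp => ?_
    have hp_le : |w p.1 p.2| - C * p.1 - φ p.2 ≤ |w t z| - C * t - φ z := hmax hp
    change sgn * w p.1 p.2 - C * p.1 - φ p.2 ≤ sgn * w t z - C * t - φ z
    linarith [hsgn_le (w p.1 p.2)]
  have along_characteristic : HasLineDerivAt ℝ (fun p : ℝ × E => sgn * w p.1 p.2 - C * p.1 - φ p.2)
      (sgn * -(α t * w t z + β t * w t (σ z)) - C * 1 - fderiv ℝ φ z (b t z))
      (t, z) (1, b t z) := by
    have time : HasLineDerivAt ℝ (Prod.fst : ℝ × E → ℝ) 1 (t, z) (1, b t z) :=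
      (hasFDerivAt_fst (𝕜 := ℝ) (p := (t, z))).hasLineDerivAt (1, b t z)
    exact ((HasDerivAt.const_mul sgn heq).sub (HasDerivAt.const_mul C time)).sub
      (hφ.hasFDerivAt.hasLineDerivAt (b t z))
  have reflected_le : |w t (σ z)| ≤ |w t z| := by
    have h : |w t (σ z)| - C * t - φ (σ z) ≤ |w t z| - C * t - φ z :=
      hmax (show (t, σ z) ∈ _ from ⟨⟨ht.1.le, ht.2⟩, mem_univ _⟩)
    linarith
  have source_nonneg : 0 ≤ sgn * (α t * w t z + β t * w t (σ z)) :=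
    mul_add_nonneg_of_abs_le hsgn hsgn_mul hβα reflected_le
  linarith [nonneg_of_isMaxOn_Icc_prod_univ ht smooth_max along_characteristic,
    neg_lt_of_abs_lt hb]

lemma abs_le_add_barrier
    (hφ : Differentiable ℝ φ) (hφ_nonneg : ∀ z, 0 ≤ φ z) (hφ_lim : Tendsto φ (cocompact E) atTop)
    (hφσ : ∀ z, φ (σ z) ≤ φ z) (hb : ∀ t ∈ Ioc 0 T, ∀ z, |fderiv ℝ φ z (b t z)| < C)
    (hw : ContinuousOn (Function.uncurry w) (Icc 0 T ×ˢ univ))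
    (hM : ∀ t ∈ Icc 0 T, ∀ z, |w t z| ≤ M) (hβα : ∀ t ∈ Ioc 0 T, |β t| ≤ α t)
    (heq : ∀ t ∈ Ioc 0 T, ∀ z, HasLineDerivAt ℝ (Function.uncurry w)
      (-(α t * w t z + β t * w t (σ z))) (t, z) (1, b t z))
    (h₀ : ∀ z, |w 0 z| ≤ S₀) {t : ℝ} (ht : t ∈ Icc 0 T) (z : E) :
    |w t z| ≤ S₀ + (C * t + φ z) := by
  have hf : ContinuousOn (fun p : ℝ × E => |w p.1 p.2| - C * p.1) (Icc 0 T ×ˢ univ) :=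
    hw.abs.sub (by fun_prop)
  have hfM : ∀ p ∈ Icc 0 T ×ˢ (univ : Set E), |w p.1 p.2| - C * p.1 ≤ M + |C| * T := by
    rintro ⟨s, y⟩ ⟨hs, -⟩
    have : |C * s| ≤ |C| * T := by
      rw [abs_mul, abs_of_nonneg hs.1]
      exact mul_le_mul_of_nonneg_left hs.2 (abs_nonneg C)
    linarith [hM s hs y, neg_le_of_abs_le this]
  obtain ⟨⟨τ, ζ⟩, ⟨hτ, -⟩, hmax⟩ := exists_isMaxOn_sub_of_tendsto_cocompact isCompact_Icc
    isClosed_Icc ⟨t, ht⟩ hf hfM hφ.continuous hφ_lim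
  have hτ₀ : τ = 0 := by
    by_contra hne
    have hτ' : τ ∈ Ioc 0 T := ⟨lt_of_le_of_ne hτ.1 (Ne.symm hne), hτ.2⟩
    exact not_isMaxOn_abs_sub_barrier hτ' (hφ ζ) (hφσ ζ) (hb τ hτ' ζ) (hβα τ hτ') (heq τ hτ' ζ) hmax
  subst hτ₀
  have hle : |w t z| - C * t - φ z ≤ |w 0 ζ| - C * 0 - φ ζ :=
    hmax (show (t, z) ∈ _ from ⟨ht, mem_univ _⟩)
  linarith [h₀ ζ, hφ_nonneg ζ]

theorem abs_le_of_nonlocal_transport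
    (hφ : Differentiable ℝ φ) (hφ_nonneg : ∀ z, 0 ≤ φ z) (hφ_lim : Tendsto φ (cocompact E) atTop)
    (hφσ : ∀ z, φ (σ z) ≤ φ z) (hb : ∀ t ∈ Ioc 0 T, ∀ z, |fderiv ℝ φ z (b t z)| ≤ K)
    (hw : ContinuousOn (Function.uncurry w) (Icc 0 T ×ˢ univ))
    (hM : ∀ t ∈ Icc 0 T, ∀ z, |w t z| ≤ M) (hβα : ∀ t ∈ Ioc 0 T, |β t| ≤ α t)
    (heq : ∀ t ∈ Ioc 0 T, ∀ z, HasLineDerivAt ℝ (Function.uncurry w)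
      (-(α t * w t z + β t * w t (σ z))) (t, z) (1, b t z))
    (h₀ : ∀ z, |w 0 z| ≤ S₀) {t : ℝ} (ht : t ∈ Icc 0 T) (z : E) :
    |w t z| ≤ S₀ := by
  have perturbed {ε : ℝ} (hε : 0 < ε) : |w t z| ≤ S₀ + ε * ((K + 1) * t + φ z) := by
    have hb' : ∀ t ∈ Ioc 0 T, ∀ z, |fderiv ℝ (fun y => ε * φ y) z (b t z)| < ε * (K + 1) := by
      intro s hs y
      rw [fderiv_const_mul (hφ y), smul_apply, smul_eq_mul, abs_mul, abs_of_pos hε]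
      exact mul_lt_mul_of_pos_left (by linarith [hb s hs y]) hε
    refine (abs_le_add_barrier (hφ.const_mul ε) (fun y => mul_nonneg hε.le (hφ_nonneg y))
      (hφ_lim.const_mul_atTop hε) (fun y => mul_le_mul_of_nonneg_left (hφσ y) hε.le) hb' hw hM hβα
      heq h₀ ht z).trans_eq ?_
    ring
  have hlim : Tendsto (fun ε => S₀ + ε * ((K + 1) * t + φ z)) (𝓝[>] 0) (𝓝 S₀) := by
    refine Tendsto.mono_left ?_ nhdsWithin_le_nhds
    exact Continuous.tendsto' (by fun_prop) _ _ (by simp)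
  exact ge_of_tendsto hlim (eventually_mem_nhdsWithin.mono fun ε hε => perturbed hε)

end MaximumPrinciple

/-- The Japanese bracket `⟨x⟩ = √(1 + x²)`, a smooth substitute for `|x|` in the barrier. -/
def japaneseBracket (x : ℝ) : ℝ := √(1 + x ^ 2)

lemma japaneseBracket_pos (x : ℝ) : 0 < japaneseBracket x := by
  unfold japaneseBracket
  positivity

lemma abs_le_japaneseBracket (x : ℝ) : |x| ≤ japaneseBracket x :=
  Real.abs_le_sqrt (by linarith)

lemma hasDerivAt_japaneseBracket (x : ℝ) :
    HasDerivAt japaneseBracket (x / japaneseBracket x) x := by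
  have h : HasDerivAt (fun x : ℝ => 1 + x ^ 2) (2 * x) x := by
    simpa using (hasDerivAt_pow 2 x).const_add 1
  have h_sqrt := h.sqrt (by positivity)
  rwa [mul_div_mul_left x _ two_ne_zero] at h_sqrt

lemma abs_div_japaneseBracket_le_one (x : ℝ) : |x / japaneseBracket x| ≤ 1 := by
  rw [abs_div, abs_of_pos (japaneseBracket_pos x), div_le_one (japaneseBracket_pos x)]
  exact abs_le_japaneseBracket x

lemma hasFDerivAt_japaneseBracket_add (z : ℝ × ℝ) :
    HasFDerivAt (fun p : ℝ × ℝ => japaneseBracket p.1 + japaneseBracket p.2)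
      ((z.1 / japaneseBracket z.1) • ContinuousLinearMap.fst ℝ ℝ ℝ +
        (z.2 / japaneseBracket z.2) • ContinuousLinearMap.snd ℝ ℝ ℝ) z :=
  ((hasDerivAt_japaneseBracket z.1).comp_hasFDerivAt z hasFDerivAt_fst).add
    ((hasDerivAt_japaneseBracket z.2).comp_hasFDerivAt z hasFDerivAt_snd)

lemma abs_fderiv_japaneseBracket_add_le (z v : ℝ × ℝ) :
    |fderiv ℝ (fun p : ℝ × ℝ => japaneseBracket p.1 + japaneseBracket p.2) z v|
      ≤ |v.1| + |v.2| := by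
  have abs_mul_le (x a : ℝ) : |x / japaneseBracket x * a| ≤ |a| := by
    rw [abs_mul]
    exact mul_le_of_le_one_left (abs_nonneg a) (abs_div_japaneseBracket_le_one x)
  rw [(hasFDerivAt_japaneseBracket_add z).fderiv]
  exact (abs_add_le _ _).trans (add_le_add (abs_mul_le z.1 v.1) (abs_mul_le z.2 v.2))

lemma tendsto_japaneseBracket_add_cocompact :
    Tendsto (fun p : ℝ × ℝ => japaneseBracket p.1 + japaneseBracket p.2)
      (cocompact (ℝ × ℝ)) atTop := by
  refine tendsto_atTop_mono (fun p => ?_) (tendsto_norm_cocompact_atTop (E := ℝ × ℝ))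
  refine max_le ?_ ?_ <;>
    simp only [Real.norm_eq_abs] <;>
    linarith [abs_le_japaneseBracket p.1, abs_le_japaneseBracket p.2, japaneseBracket_pos p.1,
      japaneseBracket_pos p.2]

section TransportSystem

variable {T : ℝ} {c d f g u v : ℝ → ℝ → ℝ}

/-- Boundedness on each strip `[0, t] × ℝ` with `t < T`; no uniformity as `t → T` is required. -/
def BoundedOnStrips (T : ℝ) (u : ℝ → ℝ → ℝ) : Prop :=
  ∀ t < T, ∃ M, ∀ s ∈ Icc 0 t, ∀ x, |u s x| ≤ M

/-- Classical solutions of the transport equation `∂ₜu + c ∂ₓu = f` on `[0, T) × ℝ`, with `u` and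
the speed `c` bounded on strips. The equation is imposed only for `0 < t`, where `deriv` is the
two-sided time derivative; the initial time is reached by continuity. -/
structure IsTransportSolution (T : ℝ) (c f u : ℝ → ℝ → ℝ) : Prop where
  continuousOn : ContinuousOn (Function.uncurry u) (Ico 0 T ×ˢ univ)
  differentiableAt : ∀ t ∈ Ioo 0 T, ∀ x, DifferentiableAt ℝ (Function.uncurry u) (t, x)
  bounded : BoundedOnStrips T u
  speed_bounded : BoundedOnStrips T c
  equation : ∀ t ∈ Ioo 0 T, ∀ x,
    deriv (fun s => u s x) t + c t x * deriv (fun y => u t y) x = f t x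

lemma BoundedOnStrips.sub (hu : BoundedOnStrips T u) (hv : BoundedOnStrips T v) :
    BoundedOnStrips T (fun t x => u t x - v t x) := by
  intro t ht
  obtain ⟨M, hM⟩ := hu t ht
  obtain ⟨N, hN⟩ := hv t ht
  exact ⟨M + N, fun s hs x => (abs_sub _ _).trans (add_le_add (hM s hs x) (hN s hs x))⟩

lemma BoundedOnStrips.neg (hu : BoundedOnStrips T u) : BoundedOnStrips T (fun t x => -u t x) := by
  simpa only [BoundedOnStrips, abs_neg] using hu

lemma isTransportSolution_of_contDiffOn
    (hu : ContDiffOn ℝ 1 (Function.uncurry u) (Ico 0 T ×ˢ univ))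
    (hu_bdd : BoundedOnStrips T u) (hc_bdd : BoundedOnStrips T c)
    (heq : ∀ t ∈ Ioo 0 T, ∀ x,
      deriv (fun s => u s x) t + c t x * deriv (fun y => u t y) x = f t x) :
    IsTransportSolution T c f u where
  continuousOn := hu.continuousOn
  differentiableAt _ ht _ := (hu.contDiffAt
    (prod_mem_nhds (Ico_mem_nhds ht.1 ht.2) univ_mem)).differentiableAt one_ne_zero
  bounded := hu_bdd
  speed_bounded := hc_bdd
  equation := heq

lemma IsTransportSolution.neg (hu : IsTransportSolution T c f u) :
    IsTransportSolution T c (fun t x => -f t x) (fun t x => -u t x) where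
  continuousOn := hu.continuousOn.neg
  differentiableAt t ht x := (hu.differentiableAt t ht x).neg
  bounded := hu.bounded.neg
  speed_bounded := hu.speed_bounded
  equation t ht x := by
    rw [deriv.fun_neg, deriv.fun_neg]
    linear_combination -hu.equation t ht x

lemma IsTransportSolution.hasLineDerivAt (hu : IsTransportSolution T c f u) {t : ℝ}
    (ht : t ∈ Ioo 0 T) (x : ℝ) :
    HasLineDerivAt ℝ (Function.uncurry u) (f t x) (t, x) (1, c t x) := by
  rw [← hu.equation t ht x]
  exact hasLineDerivAt_uncurry (hu.differentiableAt t ht x) (c t x)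

lemma IsTransportSolution.hasLineDerivAt_add (hu : IsTransportSolution T c f u)
    (hv : IsTransportSolution T d g v) {t : ℝ} (ht : t ∈ Ioo 0 T) (z : ℝ × ℝ) :
    HasLineDerivAt ℝ (Function.uncurry fun s (p : ℝ × ℝ) => u s p.1 + v s p.2)
      (f t z.1 + g t z.2) (t, z) (1, (c t z.1, d t z.2)) :=
  HasDerivAt.add (hu.hasLineDerivAt ht z.1) (hv.hasLineDerivAt ht z.2)

lemma IsTransportSolution.continuousOn_add (hu : IsTransportSolution T c f u)
    (hv : IsTransportSolution T d g v) :
    ContinuousOn (Function.uncurry fun s (p : ℝ × ℝ) => u s p.1 + v s p.2) (Ico 0 T ×ˢ univ) :=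
  (hu.continuousOn.comp (f := fun p : ℝ × ℝ × ℝ => (p.1, p.2.1)) (by fun_prop)
    fun _ hp => ⟨hp.1, mem_univ _⟩).add
  (hv.continuousOn.comp (f := fun p : ℝ × ℝ × ℝ => (p.1, p.2.2)) (by fun_prop)
    fun _ hp => ⟨hp.1, mem_univ _⟩)

theorem iSup_abs_add_le_of_isTransportSolution {α β : ℝ → ℝ}
    (hu : IsTransportSolution T c f u) (hv : IsTransportSolution T d g v)
    (hβα : ∀ t ∈ Ioo 0 T, |β t| ≤ α t)
    (hsource : ∀ t ∈ Ioo 0 T, ∀ x y,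
      f t x + g t y = -(α t * (u t x + v t y) + β t * (u t y + v t x)))
    {t : ℝ} (ht : t ∈ Ico 0 T) :
    (⨆ p : ℝ × ℝ, |u t p.1 + v t p.2|) ≤ ⨆ p : ℝ × ℝ, |u 0 p.1 + v 0 p.2| := by
  obtain ⟨Mu, hMu⟩ := hu.bounded t ht.2
  obtain ⟨Mv, hMv⟩ := hv.bounded t ht.2
  obtain ⟨Kc, hKc⟩ := hu.speed_bounded t ht.2
  obtain ⟨Kd, hKd⟩ := hv.speed_bounded t ht.2
  have hM : ∀ s ∈ Icc 0 t, ∀ p : ℝ × ℝ, |u s p.1 + v s p.2| ≤ Mu + Mv := fun s hs p =>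
    (abs_add_le _ _).trans (add_le_add (hMu s hs p.1) (hMv s hs p.2))
  have hinit : BddAbove (range fun p : ℝ × ℝ => |u 0 p.1 + v 0 p.2|) :=
    ⟨Mu + Mv, forall_mem_range.2 (hM 0 ⟨le_rfl, ht.1⟩)⟩
  have hIoo {s : ℝ} (hs : s ∈ Ioc 0 t) : s ∈ Ioo 0 T := ⟨hs.1, hs.2.trans_lt ht.2⟩
  refine ciSup_le fun p => abs_le_of_nonlocal_transport (T := t) (α := α) (β := β)
    (σ := Prod.swap) (b := fun s z => (c s z.1, d s z.2)) (K := Kc + Kd)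
    (w := fun s z => u s z.1 + v s z.2)
    (fun z => (hasFDerivAt_japaneseBracket_add z).differentiableAt)
    (fun z => (add_pos (japaneseBracket_pos z.1) (japaneseBracket_pos z.2)).le)
    tendsto_japaneseBracket_add_cocompact (fun z => (add_comm _ _).le) ?_ ?_ hM
    (fun s hs => hβα s (hIoo hs)) ?_ (fun z => le_ciSup hinit z) ⟨ht.1, le_rfl⟩ p
  · intro s hs z
    have hs' := Ioc_subset_Icc_self hs
    exact (abs_fderiv_japaneseBracket_add_le z _).trans
      (add_le_add (hKc s hs' z.1) (hKd s hs' z.2))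
  · exact (hu.continuousOn_add hv).mono (prod_mono (Icc_subset_Ico_right ht.2) subset_rfl)
  · intro s hs z
    exact hsource s (hIoo hs) z.1 z.2 ▸ hu.hasLineDerivAt_add hv (hIoo hs) z

theorem riemann_functions_bounded_general {lam : ℝ → ℝ} {r l : ℝ → ℝ → ℝ}
    (hlam : ∀ t ∈ Ioo 0 T, 0 ≤ lam t)
    (hr : IsTransportSolution T c (fun t x => -(lam t / 2) * (r t x + l t x)) r)
    (hl : IsTransportSolution T d (fun t x => -(lam t / 2) * (r t x + l t x)) l) :
    ∀ t ∈ Ico 0 T,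
      (⨆ p : ℝ × ℝ, |r t p.1 + l t p.2|) ≤ (⨆ p : ℝ × ℝ, |r 0 p.1 + l 0 p.2|) ∧
      (⨆ p : ℝ × ℝ, |r t p.1 - l t p.2|) ≤ (⨆ p : ℝ × ℝ, |r 0 p.1 - l 0 p.2|) := by
  intro t ht
  have habs : ∀ s ∈ Ioo 0 T, |lam s / 2| ≤ lam s / 2 := fun s hs =>
    (abs_of_nonneg (div_nonneg (hlam s hs) zero_le_two)).le
  constructor
  · exact iSup_abs_add_le_of_isTransportSolution hr hl habs (fun s _ x y => by ring) ht
  · simpa only [← sub_eq_add_neg] using iSup_abs_add_le_of_isTransportSolution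
      (β := fun s => -(lam s / 2)) hr hl.neg (fun s hs => (abs_neg _).trans_le (habs s hs))
      (fun s _ x y => by ring) ht

end TransportSystem

lemma Lfun_neg (u : ℝ) : Lfun (-u) = -Lfun u := by
  simp only [Lfun, neg_sq, Real.arsinh_neg]
  ring

lemma half_le_Lfun {u : ℝ} (hu : 0 ≤ u) : u / 2 ≤ Lfun u := by
  have h_arsinh : 0 ≤ Real.arsinh u := Real.arsinh_nonneg_iff.2 hu
  have h_sqrt : 1 ≤ √(1 + u ^ 2) := Real.one_le_sqrt.2 (by linarith [sq_nonneg u])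
  unfold Lfun
  linarith [le_mul_of_one_le_right hu h_sqrt]

lemma abs_le_two_mul_abs_Lfun (u : ℝ) : |u| ≤ 2 * |Lfun u| := by
  have of_nonneg {x : ℝ} (hx : 0 ≤ x) : |x| ≤ 2 * |Lfun x| := by
    rw [abs_of_nonneg hx]
    linarith [half_le_Lfun hx, le_abs_self (Lfun x)]
  rcases le_total 0 u with hu | hu
  · exact of_nonneg hu
  · simpa only [Lfun_neg, abs_neg] using of_nonneg (neg_nonneg.2 hu)

lemma Lfun_surjective : Function.Surjective Lfun := by
  have hcont : Continuous Lfun := by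
    have h_sqrt : Continuous fun u : ℝ => u * √(1 + u ^ 2) := by fun_prop
    exact (h_sqrt.add Real.continuous_arsinh).const_mul (1 / 2)
  have htop : Tendsto Lfun atTop atTop :=
    tendsto_atTop_mono' atTop ((eventually_ge_atTop 0).mono fun _ => half_le_Lfun)
      (tendsto_id.atTop_div_const two_pos)
  have hbot : Tendsto Lfun atBot atBot := by
    have h := tendsto_neg_atTop_atBot.comp (htop.comp tendsto_neg_atBot_atTop)
    simpa only [Function.comp_def, Lfun_neg, neg_neg] using h
  exact hcont.surjective htop hbot

lemma abs_u1hat_le (η : ℝ) : |u1hat η| ≤ |η| := by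
  have hL : Lfun (u1hat η) = -η / 2 := Function.invFun_eq (Lfun_surjective _)
  calc |u1hat η| ≤ 2 * |Lfun (u1hat η)| := abs_le_two_mul_abs_Lfun _
    _ = |η| := by rw [hL, abs_div, abs_neg, abs_two, mul_div_cancel₀ _ two_ne_zero]

lemma abs_kfun_le (η : ℝ) : |kfun η| ≤ 1 + |η| := by
  calc |kfun η| = kfun η := abs_of_nonneg (Real.sqrt_nonneg _)
    _ ≤ 1 + |u1hat η| := by
        simpa only [kfun, Real.norm_eq_abs, sq_abs] using sqrt_one_add_norm_sq_le (u1hat η)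
    _ ≤ 1 + |η| := add_le_add_right (abs_u1hat_le η) 1

lemma BoundedOnStrips.kfun {T : ℝ} {u : ℝ → ℝ → ℝ} (hu : BoundedOnStrips T u) :
    BoundedOnStrips T (fun t x => kfun (u t x)) := by
  intro t ht
  obtain ⟨M, hM⟩ := hu t ht
  exact ⟨1 + M, fun s hs x => (abs_kfun_le _).trans (by linarith [hM s hs x])⟩

/-- uniform boundedness of the Riemann functions: for a `C¹` bounded
solution of the diagonal system, the sup over `ℝ²` of `|r(t,x) ± ℓ(t,y)|` never
exceeds its initial value. -/
theorem riemann_functions_bounded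
    (lam T : ℝ) (hlam : 0 < lam) (hT : 0 < T)
    (r l : ℝ → ℝ → ℝ)
    (hreg_r : ContDiffOn ℝ 1 (Function.uncurry r) (Set.Ico 0 T ×ˢ (Set.univ : Set ℝ)))
    (hreg_l : ContDiffOn ℝ 1 (Function.uncurry l) (Set.Ico 0 T ×ˢ (Set.univ : Set ℝ)))
    (hsys_r : ∀ t ∈ Set.Ico (0:ℝ) T, ∀ x : ℝ,
      deriv (fun s => r s x) t + kfun (r t x - l t x) * deriv (fun y => r t y) x
        = -(lam/2) * (r t x + l t x))
    (hsys_l : ∀ t ∈ Set.Ico (0:ℝ) T, ∀ x : ℝ,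
      deriv (fun s => l s x) t - kfun (r t x - l t x) * deriv (fun y => l t y) x
        = -(lam/2) * (r t x + l t x))
    (hbdd : ∀ t' : ℝ, t' < T → ∃ M : ℝ, ∀ t ∈ Set.Icc (0:ℝ) t', ∀ x : ℝ,
      |r t x| ≤ M ∧ |l t x| ≤ M ∧
      |deriv (fun s => r s x) t| ≤ M ∧ |deriv (fun y => r t y) x| ≤ M ∧
      |deriv (fun s => l s x) t| ≤ M ∧ |deriv (fun y => l t y) x| ≤ M) :
    ∀ t ∈ Set.Ico (0:ℝ) T,
      (⨆ p : ℝ × ℝ, |r t p.1 + l t p.2|) ≤ (⨆ p : ℝ × ℝ, |r 0 p.1 + l 0 p.2|) ∧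
      (⨆ p : ℝ × ℝ, |r t p.1 - l t p.2|) ≤ (⨆ p : ℝ × ℝ, |r 0 p.1 - l 0 p.2|) := by
  have hr_bdd : BoundedOnStrips T r := fun t ht =>
    (hbdd t ht).imp fun _ hM s hs x => (hM s hs x).1
  have hl_bdd : BoundedOnStrips T l := fun t ht =>
    (hbdd t ht).imp fun _ hM s hs x => (hM s hs x).2.1
  have hk_bdd := (hr_bdd.sub hl_bdd).kfun
  refine riemann_functions_bounded_general (lam := fun _ => lam) (fun _ _ => hlam.le)
    (isTransportSolution_of_contDiffOn hreg_r hr_bdd hk_bdd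
      fun t ht => hsys_r t (Ioo_subset_Ico_self ht))
    (isTransportSolution_of_contDiffOn hreg_l hl_bdd hk_bdd.neg fun t ht x => ?_)
  rw [neg_mul, ← sub_eq_add_neg]
  exact hsys_l t (Ioo_subset_Ico_self ht) x
end
end

section
/- Let λ > 0 and let w : [0,T) × ℝ → ℝ be a C² solution of ∂ₜₜw − (1 + (∂ₓw)²)·∂ₓₓw = −λ·∂ₜw. Assume that for every t ∈ [0,T): (i) ∂ₜw(t,·) ∈ L²(ℝ) and ∂ₓw(t,·) ∈ L²(ℝ) ∩ L⁴(ℝ); (ii) differentiation under the integral sign defining E(t) is justified (the integrand and its time derivative are dominated, locally uniformly in t, by integrable functions of x); (iii) ∂ₓw(t,x)·∂ₜw(t,x)·(1 + (1/3)(∂ₓw(t,x))²) → 0 as x → ±∞. Then the energy E(t) := (1/2)∫_ℝ [ (∂ₜw(t,x))² + (∂ₓw(t,x))²·(1 + (1/6)(∂ₓw(t,x))²) ] dx is differentiable on [0,T) and satisfies the dissipation law E'(t) = −λ·∫_ℝ (∂ₜw(t,x))² dx. -/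
open Real Set Filter MeasureTheory

noncomputable section

/-- `∂ₜw`. -/
def wt (w : ℝ → ℝ → ℝ) (t x : ℝ) : ℝ := deriv (fun s => w s x) t

/-- `∂ₓw`. -/
def wx (w : ℝ → ℝ → ℝ) (t x : ℝ) : ℝ := deriv (fun y => w t y) x

/-- `∂ₜₜw`. -/
def wtt (w : ℝ → ℝ → ℝ) (t x : ℝ) : ℝ := deriv (fun s => wt w s x) t

/-- `∂ₜ∂ₓw`. -/
def wtx (w : ℝ → ℝ → ℝ) (t x : ℝ) : ℝ := deriv (fun s => wx w s x) t

/-- `∂ₓₓw`. -/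
def wxx (w : ℝ → ℝ → ℝ) (t x : ℝ) : ℝ := deriv (fun y => wx w t y) x

/-!
At a positive time the equation turns the time derivative of the energy density, increased by
`λ (∂ₜw)²`, into the exact `x`-derivative of the flux `∂ₓw ∂ₜw (1 + (∂ₓw)² / 3)`. The flux
decays at `±∞`, so the integral of this derivative vanishes.

At `t = 0` this is not available: `deriv` is two-sided while `w` is only controlled on `[0, T)`, so
`∂ₜw`, `∂ₜₜw` and `∂ₜ∂ₓw` may be unrelated to the one-sided derivatives. Still, `∂ₜw` is either the
one-sided derivative or the junk value `0`, which can only lower its square, so the kinetic and the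
potential energy are both lower semicontinuous at `0⁺` by Fatou's lemma. Their sum `E` is
continuous, hence so is each of them, and the dissipation law passes to the limit `t → 0⁺`.
-/

open scoped ENNReal Topology

section Semicontinuity

variable {X : Type*} [TopologicalSpace X] {s : Set X} {a : X}

lemma continuousWithinAt_left_of_lowerSemicontinuousWithinAt_of_add
    {G : Type*} [AddCommGroup G] [LinearOrder G] [IsOrderedAddMonoid G] [TopologicalSpace G]
    [OrderTopology G] {f g : X → G}
    (hf : LowerSemicontinuousWithinAt f s a) (hg : LowerSemicontinuousWithinAt g s a)
    (hfg : ContinuousWithinAt (fun x => f x + g x) s a) : ContinuousWithinAt f s a := by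
  have hneg : UpperSemicontinuousWithinAt (fun x => -g x) s a :=
    continuous_neg.continuousAt.comp_lowerSemicontinuousWithinAt_antitone hg
      fun _ _ h => neg_le_neg h
  refine continuousWithinAt_iff_lower_upperSemicontinuousWithinAt.2 ⟨hf, ?_⟩
  simpa only [add_neg_cancel_right] using hfg.upperSemicontinuousWithinAt.add hneg

variable [FirstCountableTopology X] {α : Type*} [MeasurableSpace α] {μ : Measure α}

lemma lowerSemicontinuousWithinAt_lintegral {F : X → α → ℝ≥0∞}
    (hmeas : ∀ t ∈ s, AEMeasurable (F t) μ)
    (hF : ∀ᵐ x ∂μ, LowerSemicontinuousWithinAt (fun t => F t x) s a) :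
    LowerSemicontinuousWithinAt (fun t => ∫⁻ x, F t x ∂μ) s a := by
  classical
  have hmeas' (t : X) : AEMeasurable (s.indicator F t) μ := by
    by_cases ht : t ∈ s
    · simpa only [indicator_of_mem ht] using hmeas t ht
    · simpa only [indicator_of_notMem ht] using! aemeasurable_zero
  have hindicator : ∀ᶠ t in 𝓝[s] a, s.indicator F t = F t :=
    eventually_mem_nhdsWithin.mono fun t ht => indicator_of_mem ht F
  rw [lowerSemicontinuousWithinAt_iff_le_liminf]
  calc ∫⁻ x, F a x ∂μ
      ≤ ∫⁻ x, liminf (fun t => s.indicator F t x) (𝓝[s] a) ∂μ := by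
        refine lintegral_mono_ae (hF.mono fun x hx => hx.le_liminf.trans_eq ?_)
        exact liminf_congr (hindicator.mono fun t ht => (congrFun ht x).symm)
    _ ≤ liminf (fun t => ∫⁻ x, s.indicator F t x ∂μ) (𝓝[s] a) := lintegral_liminf_le' hmeas'
    _ = liminf (fun t => ∫⁻ x, F t x ∂μ) (𝓝[s] a) :=
        liminf_congr (hindicator.mono fun t ht => by rw [ht])

lemma lowerSemicontinuousWithinAt_integral {F : X → α → ℝ} (ha : a ∈ s)
    (hnonneg : ∀ t ∈ s, 0 ≤ᵐ[μ] F t) (hint : ∀ t ∈ s, Integrable (F t) μ)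
    (hF : ∀ᵐ x ∂μ, LowerSemicontinuousWithinAt (fun t => F t x) s a) :
    LowerSemicontinuousWithinAt (fun t => ∫ x, F t x ∂μ) s a := by
  have hlintegral : LowerSemicontinuousWithinAt
      (fun t => ∫⁻ x, ENNReal.ofReal (F t x) ∂μ) s a :=
    lowerSemicontinuousWithinAt_lintegral
      (fun t ht => (hint t ht).aestronglyMeasurable.aemeasurable.ennreal_ofReal)
      (hF.mono fun x hx => ENNReal.continuous_ofReal.continuousAt.comp_lowerSemicontinuousWithinAt
        hx fun _ _ => ENNReal.ofReal_le_ofReal)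
  have hofReal (t : X) (ht : t ∈ s) :
      ENNReal.ofReal (∫ x, F t x ∂μ) = ∫⁻ x, ENNReal.ofReal (F t x) ∂μ :=
    ofReal_integral_eq_lintegral_ofReal (hint t ht) (hnonneg t ht)
  intro c hc
  rcases lt_or_ge c 0 with hc₀ | hc₀
  · exact eventually_mem_nhdsWithin.mono fun t ht =>
      hc₀.trans_le (integral_nonneg_of_ae (hnonneg t ht))
  · have hca : ENNReal.ofReal c < ∫⁻ x, ENNReal.ofReal (F a x) ∂μ :=
      hofReal a ha ▸ (ENNReal.ofReal_lt_ofReal_iff_of_nonneg hc₀).2 hc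
    filter_upwards [hlintegral _ hca, eventually_mem_nhdsWithin] with t hct ht
    exact (ENNReal.ofReal_lt_ofReal_iff_of_nonneg hc₀).1 (hofReal t ht ▸ hct)

end Semicontinuity

section Endpoint

variable {F : Type*} [NormedAddCommGroup F] [NormedSpace ℝ F] {a b : ℝ}

lemma hasDerivAt_of_tendsto_hasDerivAt_right {f f' : ℝ → F} {v : F}
    (hf : DifferentiableAt ℝ f a) (hf' : ∀ᶠ t in 𝓝[>] a, HasDerivAt f (f' t) t)
    (hlim : Tendsto f' (𝓝[>] a) (𝓝 v)) : HasDerivAt f v a := by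
  have hright : HasDerivWithinAt f v (Ici a) a :=
    hasDerivWithinAt_Ici_of_tendsto_deriv (s := {t | HasDerivAt f (f' t) t})
      (fun _ ht => HasDerivAt.differentiableAt ht |>.differentiableWithinAt)
      hf.continuousAt.continuousWithinAt hf' (hlim.congr' (hf'.mono fun _ ht => ht.deriv.symm))
  exact (uniqueDiffWithinAt_Ici a).eq_deriv _ hright hf.hasDerivAt.hasDerivWithinAt ▸ hf.hasDerivAt

lemma lowerSemicontinuousWithinAt_comp_deriv_Ico {f : ℝ → F} {φ : F → ℝ}
    (hf : ContDiffOn ℝ 1 f (Ico a b)) (hab : a < b) (hφ : Continuous φ) (hφ₀ : ∀ v, φ 0 ≤ φ v) :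
    LowerSemicontinuousWithinAt (fun t => φ (deriv f t)) (Ico a b) a := by
  have ha : a ∈ Ico a b := left_mem_Ico.2 hab
  have hle : φ (deriv f a) ≤ φ (derivWithin f (Ico a b) a) := by
    by_cases hd : DifferentiableAt ℝ f a
    · rw [hd.derivWithin (uniqueDiffOn_Ico a b a ha)]
    · rw [deriv_zero_of_not_differentiableAt hd]
      exact hφ₀ _
  have hcont : ContinuousWithinAt (fun t => φ (derivWithin f (Ico a b) t)) (Ico a b) a :=
    hφ.continuousAt.comp_continuousWithinAt
      (hf.continuousOn_derivWithin (uniqueDiffOn_Ico a b) le_rfl a ha)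
  intro c hc
  filter_upwards [hcont.lowerSemicontinuousWithinAt c (hc.trans_le hle), eventually_mem_nhdsWithin]
    with t hct ht
  rcases ht.1.eq_or_lt with rfl | hat
  · exact hc
  · rwa [derivWithin_of_mem_nhds (Ico_mem_nhds hat ht.2)] at hct

end Endpoint

section PartialDerivatives

variable {w : ℝ → ℝ → ℝ} {t x : ℝ}

lemma hasDerivAt_fst_of_differentiableAt_uncurry
    (h : DifferentiableAt ℝ (Function.uncurry w) (t, x)) :
    HasDerivAt (fun s => w s x) (fderiv ℝ (Function.uncurry w) (t, x) (1, 0)) t :=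
  h.hasFDerivAt.comp_hasDerivAt (f := fun s => (s, x)) t
    ((hasDerivAt_id t).prodMk (hasDerivAt_const t x))

lemma hasDerivAt_snd_of_differentiableAt_uncurry
    (h : DifferentiableAt ℝ (Function.uncurry w) (t, x)) :
    HasDerivAt (fun y => w t y) (fderiv ℝ (Function.uncurry w) (t, x) (0, 1)) x :=
  h.hasFDerivAt.comp_hasDerivAt x ((hasDerivAt_const x t).prodMk (hasDerivAt_id x))

lemma hasDerivAt_snd_of_differentiableWithinAt_uncurry {s : Set ℝ} (ht : t ∈ s)
    (h : DifferentiableWithinAt ℝ (Function.uncurry w) (s ×ˢ univ) (t, x)) :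
    HasDerivAt (fun y => w t y)
      (fderivWithin ℝ (Function.uncurry w) (s ×ˢ univ) (t, x) (0, 1)) x :=
  h.hasFDerivWithinAt.comp_hasDerivAt x ((hasDerivAt_const x t).prodMk (hasDerivAt_id x))
    (Eventually.of_forall fun y => mk_mem_prod ht (mem_univ y))

lemma continuousOn_uncurry_wx {s : Set ℝ} (hs : UniqueDiffOn ℝ s)
    (hw : ContDiffOn ℝ 1 (Function.uncurry w) (s ×ˢ univ)) :
    ContinuousOn (Function.uncurry (wx w)) (s ×ˢ univ) := by
  refine ((hw.continuousOn_fderivWithin (hs.prod uniqueDiffOn_univ) le_rfl).clm_apply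
    (continuousOn_const (c := ((0, 1) : ℝ × ℝ)))).congr fun p hp => ?_
  exact (hasDerivAt_snd_of_differentiableWithinAt_uncurry hp.1
    (hw.differentiableOn one_ne_zero p hp)).deriv

lemma uncurry_wt_eventuallyEq_fderiv {p : ℝ × ℝ} (hw : ContDiffAt ℝ 1 (Function.uncurry w) p) :
    Function.uncurry (wt w) =ᶠ[𝓝 p] fun q => fderiv ℝ (Function.uncurry w) q (1, 0) :=
  (hw.eventually (by simp)).mono fun _ hq =>
    (hasDerivAt_fst_of_differentiableAt_uncurry (hq.differentiableAt one_ne_zero)).deriv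

lemma uncurry_wx_eventuallyEq_fderiv {p : ℝ × ℝ} (hw : ContDiffAt ℝ 1 (Function.uncurry w) p) :
    Function.uncurry (wx w) =ᶠ[𝓝 p] fun q => fderiv ℝ (Function.uncurry w) q (0, 1) :=
  (hw.eventually (by simp)).mono fun _ hq =>
    (hasDerivAt_snd_of_differentiableAt_uncurry (hq.differentiableAt one_ne_zero)).deriv

lemma hasFDerivAt_uncurry_wt {p : ℝ × ℝ} (hw : ContDiffAt ℝ 2 (Function.uncurry w) p) :
    HasFDerivAt (Function.uncurry (wt w))
      ((fderiv ℝ (fderiv ℝ (Function.uncurry w)) p).flip (1, 0)) p := by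
  have hd := ((hw.fderiv_right (m := 1) (by norm_num)).differentiableAt one_ne_zero).hasFDerivAt
  refine HasFDerivAt.congr_of_eventuallyEq ?_
    (uncurry_wt_eventuallyEq_fderiv (hw.of_le one_le_two))
  simpa using hd.clm_apply (hasFDerivAt_const ((1, 0) : ℝ × ℝ) p)

lemma hasFDerivAt_uncurry_wx {p : ℝ × ℝ} (hw : ContDiffAt ℝ 2 (Function.uncurry w) p) :
    HasFDerivAt (Function.uncurry (wx w))
      ((fderiv ℝ (fderiv ℝ (Function.uncurry w)) p).flip (0, 1)) p := by
  have hd := ((hw.fderiv_right (m := 1) (by norm_num)).differentiableAt one_ne_zero).hasFDerivAt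
  refine HasFDerivAt.congr_of_eventuallyEq ?_
    (uncurry_wx_eventuallyEq_fderiv (hw.of_le one_le_two))
  simpa using hd.clm_apply (hasFDerivAt_const ((0, 1) : ℝ × ℝ) p)

lemma hasDerivAt_wx (hw : ContDiffAt ℝ 2 (Function.uncurry w) (t, x)) :
    HasDerivAt (wx w t) (wxx w t x) x :=
  (hasDerivAt_snd_of_differentiableAt_uncurry
    (hasFDerivAt_uncurry_wx hw).differentiableAt).differentiableAt.hasDerivAt

lemma hasDerivAt_wt (hw : ContDiffAt ℝ 2 (Function.uncurry w) (t, x)) :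
    HasDerivAt (wt w t) (wtx w t x) x := by
  have hwt := hasFDerivAt_uncurry_wt hw
  have hwx := hasFDerivAt_uncurry_wx hw
  have hsymm : IsSymmSndFDerivAt ℝ (Function.uncurry w) (t, x) := hw.isSymmSndFDerivAt (by simp)
  have hwtx : wtx w t x = fderiv ℝ (Function.uncurry (wt w)) (t, x) (0, 1) :=
    calc wtx w t x = fderiv ℝ (Function.uncurry (wx w)) (t, x) (1, 0) :=
          (hasDerivAt_fst_of_differentiableAt_uncurry hwx.differentiableAt).deriv
      _ = fderiv ℝ (fderiv ℝ (Function.uncurry w)) (t, x) (1, 0) (0, 1) := by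
          rw [hwx.fderiv, ContinuousLinearMap.flip_apply]
      _ = fderiv ℝ (fderiv ℝ (Function.uncurry w)) (t, x) (0, 1) (1, 0) := hsymm (1, 0) (0, 1)
      _ = fderiv ℝ (Function.uncurry (wt w)) (t, x) (0, 1) := by
          rw [hwt.fderiv, ContinuousLinearMap.flip_apply]
  exact hwtx ▸ hasDerivAt_snd_of_differentiableAt_uncurry hwt.differentiableAt

end PartialDerivatives

section EnergyBalance

variable {w : ℝ → ℝ → ℝ} {σ σ' : ℝ → ℝ} {lam t : ℝ}

lemma hasDerivAt_energyFlux {x : ℝ} (hw : ContDiffAt ℝ 2 (Function.uncurry w) (t, x))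
    (hσ : HasDerivAt σ (σ' (wx w t x)) (wx w t x))
    (hpde : wtt w t x - σ' (wx w t x) * wxx w t x = -lam * wt w t x) :
    HasDerivAt (fun y => σ (wx w t y) * wt w t y)
      ((wt w t x * wtt w t x + σ (wx w t x) * wtx w t x) + lam * (wt w t x) ^ 2) x := by
  refine ((hσ.comp x (hasDerivAt_wx hw)).mul (hasDerivAt_wt hw)).congr_deriv ?_
  simp only [Function.comp_apply]
  linear_combination -wt w t x * hpde

lemma integral_energyRate_eq (hw : ∀ x, ContDiffAt ℝ 2 (Function.uncurry w) (t, x))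
    (hσ : ∀ ξ, HasDerivAt σ (σ' ξ) ξ)
    (hpde : ∀ x, wtt w t x - σ' (wx w t x) * wxx w t x = -lam * wt w t x)
    (hkin : Integrable (fun x => (wt w t x) ^ 2))
    (hrate : Integrable (fun x => wt w t x * wtt w t x + σ (wx w t x) * wtx w t x))
    (htop : Tendsto (fun x => σ (wx w t x) * wt w t x) atTop (𝓝 0))
    (hbot : Tendsto (fun x => σ (wx w t x) * wt w t x) atBot (𝓝 0)) :
    ∫ x, (wt w t x * wtt w t x + σ (wx w t x) * wtx w t x) = -lam * ∫ x, (wt w t x) ^ 2 := by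
  have hbalance := integral_of_hasDerivAt_of_tendsto
    (fun x => hasDerivAt_energyFlux (hw x) (hσ _) (hpde x))
    (hrate.add (hkin.const_mul lam)) hbot htop
  rw [integral_add hrate (hkin.const_mul lam), integral_const_mul] at hbalance
  linarith

end EnergyBalance

section InitialTime

variable {w : ℝ → ℝ → ℝ} {a b : ℝ}

lemma lowerSemicontinuousWithinAt_integral_wt {φ : ℝ → ℝ} (hab : a < b)
    (hw : ContDiffOn ℝ 1 (Function.uncurry w) (Ico a b ×ˢ univ))
    (hφ : Continuous φ) (hφ_zero : φ 0 = 0) (hφ_nonneg : ∀ v, 0 ≤ φ v)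
    (hint : ∀ t ∈ Ico a b, Integrable (fun x => φ (wt w t x))) :
    LowerSemicontinuousWithinAt (fun t => ∫ x, φ (wt w t x)) (Ico a b) a := by
  refine lowerSemicontinuousWithinAt_integral (left_mem_Ico.2 hab)
    (fun t _ => Eventually.of_forall fun x => hφ_nonneg _) hint (Eventually.of_forall fun x => ?_)
  have hslice : ContDiffOn ℝ 1 (fun t => w t x) (Ico a b) :=
    hw.comp (contDiffOn_id.prodMk contDiffOn_const) fun t ht => mk_mem_prod ht (mem_univ x)
  exact lowerSemicontinuousWithinAt_comp_deriv_Ico hslice hab hφ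
    fun v => hφ_zero.trans_le (hφ_nonneg v)

lemma lowerSemicontinuousWithinAt_integral_wx {s : Set ℝ} {W : ℝ → ℝ} (hs : UniqueDiffOn ℝ s)
    (ha : a ∈ s) (hw : ContDiffOn ℝ 1 (Function.uncurry w) (s ×ˢ univ))
    (hW : Continuous W) (hW_nonneg : ∀ ξ, 0 ≤ W ξ)
    (hint : ∀ t ∈ s, Integrable (fun x => W (wx w t x))) :
    LowerSemicontinuousWithinAt (fun t => ∫ x, W (wx w t x)) s a := by
  refine lowerSemicontinuousWithinAt_integral ha
    (fun t _ => Eventually.of_forall fun x => hW_nonneg _) hint (Eventually.of_forall fun x => ?_)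
  have hwx : ContinuousWithinAt (fun t => wx w t x) s a :=
    (continuousOn_uncurry_wx hs hw).comp (f := fun t => (t, x)) (by fun_prop)
      (fun t ht => mk_mem_prod ht (mem_univ x)) a ha
  exact (hW.continuousAt.comp_continuousWithinAt hwx).lowerSemicontinuousWithinAt

lemma continuousWithinAt_integral_sq_wt {W : ℝ → ℝ} (hab : a < b)
    (hw : ContDiffOn ℝ 1 (Function.uncurry w) (Ico a b ×ˢ univ))
    (hW : Continuous W) (hW_nonneg : ∀ ξ, 0 ≤ W ξ)
    (hkin : ∀ t ∈ Ico a b, Integrable (fun x => (wt w t x) ^ 2))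
    (hpot : ∀ t ∈ Ico a b, Integrable (fun x => W (wx w t x)))
    (henergy : ContinuousWithinAt (fun t => ∫ x, ((1 / 2) * (wt w t x) ^ 2 + W (wx w t x)))
      (Ico a b) a) :
    ContinuousWithinAt (fun t => ∫ x, (wt w t x) ^ 2) (Ico a b) a := by
  have ha : a ∈ Ico a b := left_mem_Ico.2 hab
  have hkin' : ∀ t ∈ Ico a b, Integrable (fun x => (1 / 2) * (wt w t x) ^ 2) :=
    fun t ht => (hkin t ht).const_mul (1 / 2)
  have hlsc_kin := lowerSemicontinuousWithinAt_integral_wt (φ := fun v => (1 / 2) * v ^ 2) hab hw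
    (by fun_prop) (by simp) (fun v => by positivity) hkin'
  have hlsc_pot :=
    lowerSemicontinuousWithinAt_integral_wx (uniqueDiffOn_Ico a b) ha hw hW hW_nonneg hpot
  have hsum : ContinuousWithinAt
      (fun t => (∫ x, (1 / 2) * (wt w t x) ^ 2) + ∫ x, W (wx w t x)) (Ico a b) a :=
    henergy.congr (fun t ht => (integral_add (hkin' t ht) (hpot t ht)).symm)
      (integral_add (hkin' a ha) (hpot a ha)).symm
  have hhalf :=
    continuousWithinAt_left_of_lowerSemicontinuousWithinAt_of_add hlsc_kin hlsc_pot hsum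
  refine (hhalf.const_mul 2).congr_of_mem (fun t _ => ?_) ha
  rw [integral_const_mul]
  ring

end InitialTime

theorem energy_dissipation_law_general
    (lam T : ℝ) (W σ σ' : ℝ → ℝ)
    (hW : ∀ ξ, HasDerivAt W (σ ξ) ξ) (hσ : ∀ ξ, HasDerivAt σ (σ' ξ) ξ)
    (hW_nonneg : ∀ ξ, 0 ≤ W ξ)
    (w : ℝ → ℝ → ℝ)
    (hreg : ContDiffOn ℝ 2 (Function.uncurry w) (Ico 0 T ×ˢ univ))
    (hpde : ∀ t ∈ Ico 0 T, ∀ x,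
      wtt w t x - σ' (wx w t x) * wxx w t x = -lam * wt w t x)
    (E : ℝ → ℝ)
    (hE : ∀ t ∈ Ico 0 T, E t = ∫ x, ((1 / 2) * (wt w t x) ^ 2 + W (wx w t x)))
    (hkin : ∀ t ∈ Ico 0 T, Integrable (fun x => (wt w t x) ^ 2))
    (hpot : ∀ t ∈ Ico 0 T, Integrable (fun x => W (wx w t x)))
    (hDUI : ∀ t ∈ Ico 0 T,
      Integrable (fun x => wt w t x * wtt w t x + σ (wx w t x) * wtx w t x) ∧
      HasDerivAt E (∫ x, (wt w t x * wtt w t x + σ (wx w t x) * wtx w t x)) t)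
    (hbdry : ∀ t ∈ Ico 0 T,
      Tendsto (fun x => σ (wx w t x) * wt w t x) atTop (𝓝 0) ∧
      Tendsto (fun x => σ (wx w t x) * wt w t x) atBot (𝓝 0)) :
    ∀ t ∈ Ico 0 T, HasDerivAt E (-lam * ∫ x, (wt w t x) ^ 2) t := by
  have hinterior : ∀ t ∈ Ioo 0 T, HasDerivAt E (-lam * ∫ x, (wt w t x) ^ 2) t := by
    intro t ht
    have ht' : t ∈ Ico 0 T := Ioo_subset_Ico_self ht
    have hw (x : ℝ) : ContDiffAt ℝ 2 (Function.uncurry w) (t, x) :=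
      hreg.contDiffAt (prod_mem_nhds (Ico_mem_nhds ht.1 ht.2) univ_mem)
    exact (hDUI t ht').2.congr_deriv (integral_energyRate_eq hw hσ (hpde t ht') (hkin t ht')
      (hDUI t ht').1 (hbdry t ht').1 (hbdry t ht').2)
  intro t ht
  rcases ht.1.eq_or_lt with rfl | ht₀
  · have hdiff : DifferentiableAt ℝ E 0 := (hDUI 0 ht).2.differentiableAt
    have hW_cont : Continuous W := continuous_iff_continuousAt.2 fun ξ => (hW ξ).continuousAt
    have hkin_cont : ContinuousWithinAt (fun t => ∫ x, (wt w t x) ^ 2) (Ico 0 T) 0 :=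
      continuousWithinAt_integral_sq_wt ht.2 (hreg.of_le one_le_two) hW_cont hW_nonneg hkin hpot
        (hdiff.continuousAt.continuousWithinAt.congr_of_mem (fun t ht => (hE t ht).symm) ht)
    have hright : Tendsto (fun t => ∫ x, (wt w t x) ^ 2) (𝓝[>] 0) (𝓝 (∫ x, (wt w 0 x) ^ 2)) :=
      hkin_cont.tendsto.mono_left (nhdsWithin_le_of_mem (Ico_mem_nhdsGT ht.2))
    exact hasDerivAt_of_tendsto_hasDerivAt_right hdiff
      (eventually_of_mem (Ioo_mem_nhdsGT ht.2) hinterior) (hright.const_mul (-lam))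
  · exact hinterior t ⟨ht₀, ht.2⟩

/-- The potential energy density `W` of the twist waves, with the factor `1/2` of the energy
included, so that `W'' = Q²`. -/
def twistPotential (ξ : ℝ) : ℝ := (1 / 2) * (ξ ^ 2 * (1 + (1 / 6) * ξ ^ 2))

/-- The stress `W'` of the twist waves: the term `Q²(∂ₓw) ∂ₓₓw` of the equation is the
`x`-derivative of `W'(∂ₓw)`. -/
def twistStress (ξ : ℝ) : ℝ := ξ * (1 + (1 / 3) * ξ ^ 2)

lemma hasDerivAt_twistPotential (ξ : ℝ) : HasDerivAt twistPotential (twistStress ξ) ξ := by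
  have h := ((hasDerivAt_pow 2 ξ).mul
    (((hasDerivAt_pow 2 ξ).const_mul (1 / 6)).const_add 1)).const_mul (1 / 2)
  refine h.congr_deriv ?_
  simp only [twistStress]
  ring

lemma hasDerivAt_twistStress (ξ : ℝ) : HasDerivAt twistStress (1 + ξ ^ 2) ξ := by
  have h := (hasDerivAt_id ξ).mul (((hasDerivAt_pow 2 ξ).const_mul (1 / 3)).const_add 1)
  refine h.congr_deriv ?_
  simp only [id]
  ring

lemma twistPotential_nonneg (ξ : ℝ) : 0 ≤ twistPotential ξ := by
  unfold twistPotential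
  positivity

lemma integrable_twistPotential_comp {α : Type*} [MeasurableSpace α] {μ : Measure α} {f : α → ℝ}
    (h₂ : Integrable (fun x => (f x) ^ 2) μ) (h₄ : Integrable (fun x => (f x) ^ 4) μ) :
    Integrable (fun x => twistPotential (f x)) μ := by
  refine ((h₂.const_mul (1 / 2)).add (h₄.const_mul (1 / 12))).congr
    (Eventually.of_forall fun x => ?_)
  simp only [Pi.add_apply, twistPotential]
  ring

/-- energy dissipation law `E'(t) = −λ ∫ (∂ₜw)²` for `C²` solutions of
the damped quasilinear wave equation, under square/quartic integrability of the
derivatives, justified differentiation under the integral sign, and decay of the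
boundary term `∂ₓw·∂ₜw·(1+(1/3)(∂ₓw)²)` at `±∞`. -/
theorem energy_dissipation_law
    (lam T : ℝ) (hlam : 0 < lam)
    (w : ℝ → ℝ → ℝ)
    (hreg : ContDiffOn ℝ 2 (Function.uncurry w) (Set.Ico 0 T ×ˢ (Set.univ : Set ℝ)))
    (hpde : ∀ t ∈ Set.Ico (0:ℝ) T, ∀ x : ℝ,
      wtt w t x - (1 + (wx w t x)^2) * wxx w t x = -lam * wt w t x)
    (E : ℝ → ℝ)
    (hE : ∀ t : ℝ, E t = (1/2) * ∫ x : ℝ,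
      ((wt w t x)^2 + (wx w t x)^2 * (1 + (1/6) * (wx w t x)^2)))
    -- (i) integrability
    (hint₁ : ∀ t ∈ Set.Ico (0:ℝ) T, Integrable (fun x => (wt w t x)^2))
    (hint₂ : ∀ t ∈ Set.Ico (0:ℝ) T, Integrable (fun x => (wx w t x)^2))
    (hint₃ : ∀ t ∈ Set.Ico (0:ℝ) T, Integrable (fun x => (wx w t x)^4))
    -- (ii) differentiation under the integral sign is justified
    (hDUI : ∀ t ∈ Set.Ico (0:ℝ) T,
      Integrable (fun x => wt w t x * wtt w t x
        + wx w t x * (1 + (1/3) * (wx w t x)^2) * wtx w t x) ∧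
      HasDerivAt E (∫ x : ℝ, (wt w t x * wtt w t x
        + wx w t x * (1 + (1/3) * (wx w t x)^2) * wtx w t x)) t)
    -- (iii) decay of the boundary term
    (hbdry : ∀ t ∈ Set.Ico (0:ℝ) T,
      Filter.Tendsto (fun x => wx w t x * wt w t x * (1 + (1/3) * (wx w t x)^2))
        Filter.atTop (nhds 0) ∧
      Filter.Tendsto (fun x => wx w t x * wt w t x * (1 + (1/3) * (wx w t x)^2))
        Filter.atBot (nhds 0)) :
    ∀ t ∈ Set.Ico (0:ℝ) T,
      HasDerivAt E (-lam * ∫ x : ℝ, (wt w t x)^2) t := by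
  have henergy (t : ℝ) : E t = ∫ x, ((1 / 2) * (wt w t x) ^ 2 + twistPotential (wx w t x)) := by
    simp only [hE, twistPotential, ← mul_add, integral_const_mul]
  have hflux : ∀ t ∈ Ico 0 T,
      Tendsto (fun x => twistStress (wx w t x) * wt w t x) atTop (𝓝 0) ∧
      Tendsto (fun x => twistStress (wx w t x) * wt w t x) atBot (𝓝 0) := by
    simpa only [twistStress, mul_right_comm] using hbdry
  exact energy_dissipation_law_general lam T twistPotential twistStress (fun ξ => 1 + ξ ^ 2)
    hasDerivAt_twistPotential hasDerivAt_twistStress twistPotential_nonneg w hreg hpde E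
    (fun t _ => henergy t) hint₁
    (fun t ht => integrable_twistPotential_comp (hint₂ t ht) (hint₃ t ht))
    hDUI hflux
end
end

section
/- Let λ > 0 and let r, ℓ : [0,T) × ℝ → ℝ be a C¹ solution of the diagonal system with initial data r(0,·) = r₀ = −ℓ(0,·), where r₀ is bounded and C¹, the limit r₀(+∞) := lim_{x→+∞} r₀(x) exists and is finite, and |r(t,x) − ℓ(t,y)| ≤ 2·sup|r₀| for all t, x, y. Assume the characteristic flows x₁, x₂ and the correspondence map β(t,α) (determined by x₁(t,α) = x₂(t, β(t,α))) exist and are C¹. Suppose α ∈ ℝ satisfies: r₀'(α)·(r₀(α) + r₀(+∞)) < 0 and r₀'(x)·r₀(α) < 0 for every x ≥ α. Then along the forward characteristic x₁(·,α), for every t ∈ [0,T): if r₀(α) > 0 then η_L(t,α) ≤ η(t, x₁(t,α)) ≤ η_U(t,α), while if r₀(α) < 0 then η_U(t,α) ≤ η(t, x₁(t,α)) ≤ η_L(t,α). -/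
/-!
Along a solution, `r` and `-ℓ` relax towards each other at rate `λ/2` while being transported with
opposite speeds. Their maximum therefore obeys a maximum principle on the region enclosed by the
forward characteristic from `α` and the backward characteristic from `β` that meets it: there both
`r` and `-ℓ` stay below `M = max r₀` over `[α, β]`. Inserting this bound into the equation for `r`
along the forward and for `-ℓ` along the backward characteristic makes `A(s)(r - M)` and
`A(s)(-ℓ - M)` nonincreasing, and adding the two at the meeting point gives the upper bound. The
lower bound is the upper bound for the solution `(-r, -ℓ)`.
-/

open Real Set Filter MeasureTheory

noncomputable section

/-- `η(t,x) = r(t,x) − ℓ(t,x)`. -/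
def etafun (r l : ℝ → ℝ → ℝ) (t x : ℝ) : ℝ := r t x - l t x

/-- Weighted Riemann derivative `p(t,x) = A(t)·√(k(η(t,x)))·∂ₓr(t,x)`. -/
def pfun (lam : ℝ) (r l : ℝ → ℝ → ℝ) (t x : ℝ) : ℝ :=
  Afun lam t * Real.sqrt (kfun (etafun r l t x)) * deriv (fun y => r t y) x

/-- Weighted Riemann derivative `q(t,x) = A(t)·√(k(η(t,x)))·∂ₓℓ(t,x)`. -/
def qfun (lam : ℝ) (r l : ℝ → ℝ → ℝ) (t x : ℝ) : ℝ :=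
  Afun lam t * Real.sqrt (kfun (etafun r l t x)) * deriv (fun y => l t y) x

open scoped Topology

section RealFunctions

theorem antitoneOn_exp_mul_sub {D : Set ℝ} (hD : Convex ℝ D) {μ M : ℝ} {f f' : ℝ → ℝ}
    (hf : ContinuousOn f D) (hf' : ∀ s ∈ interior D, HasDerivAt f (f' s) s)
    (hle : ∀ s ∈ interior D, f' s ≤ μ * (M - f s)) :
    AntitoneOn (fun s => exp (μ * s) * (f s - M)) D := by
  have hexp (s : ℝ) : HasDerivAt (fun s => exp (μ * s)) (exp (μ * s) * μ) s := by
    simpa using ((hasDerivAt_id s).const_mul μ).exp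
  refine antitoneOn_of_hasDerivWithinAt_nonpos hD (by fun_prop)
    (fun s hs => ((hexp s).mul ((hf' s hs).sub_const M)).hasDerivWithinAt) fun s hs => ?_
  calc exp (μ * s) * μ * (f s - M) + exp (μ * s) * f' s
      = exp (μ * s) * (f' s - μ * (M - f s)) := by ring
    _ ≤ 0 := mul_nonpos_of_nonneg_of_nonpos (exp_pos _).le (sub_nonpos.2 (hle s hs))

theorem antitoneOn_of_deriv_mul_neg {D : Set ℝ} (hD : Convex ℝ D) {f : ℝ → ℝ} {c : ℝ}
    (hf : Differentiable ℝ f) (hc : 0 < c) (h : ∀ x ∈ D, deriv f x * c < 0) : AntitoneOn f D :=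
  antitoneOn_of_deriv_nonpos hD hf.continuous.continuousOn hf.differentiableOn
    fun x hx => (neg_of_mul_neg_left (h x (interior_subset hx)) hc.le).le

theorem monotoneOn_of_deriv_mul_neg {D : Set ℝ} (hD : Convex ℝ D) {f : ℝ → ℝ} {c : ℝ}
    (hf : Differentiable ℝ f) (hc : c < 0) (h : ∀ x ∈ D, deriv f x * c < 0) : MonotoneOn f D :=
  monotoneOn_of_deriv_nonneg hD hf.continuous.continuousOn hf.differentiableOn
    fun x hx => (pos_of_mul_neg_left (h x (interior_subset hx)) hc.le).le

theorem eventually_nhdsLT_lt_of_hasDerivWithinAt {f g : ℝ → ℝ} {f' g' a : ℝ}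
    (hf : HasDerivWithinAt f f' (Iio a) a) (hg : HasDerivWithinAt g g' (Iio a) a)
    (hle : f a ≤ g a) (hderiv : f a = g a → g' < f') : ∀ᶠ s in 𝓝[<] a, f s < g s := by
  rcases hle.lt_or_eq with hlt | heq
  · exact hf.continuousWithinAt.eventually_lt hg.continuousWithinAt hlt
  · have hslope : Tendsto (slope (g - f) a) (𝓝[<] a) (𝓝 (g' - f')) :=
      (hasDerivWithinAt_iff_tendsto_slope' self_notMem_Iio).1 (hg.sub hf)
    filter_upwards [hslope.eventually_lt_const (sub_neg.2 (hderiv heq)), self_mem_nhdsWithin]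
      with s hneg hs
    rw [slope_comm, slope_neg_iff_of_le (le_of_lt hs)] at hneg
    simpa [heq] using hneg

theorem fderiv_uncurry_apply_one {f : ℝ → ℝ → ℝ} {s x : ℝ}
    (hf : DifferentiableAt ℝ (Function.uncurry f) (s, x)) (c : ℝ) :
    fderiv ℝ (Function.uncurry f) (s, x) (1, c) =
      deriv (fun τ => f τ x) s + c * deriv (fun y => f s y) x := by
  have htime : deriv (fun τ => f τ x) s = fderiv ℝ (Function.uncurry f) (s, x) (1, 0) :=
    (hf.hasFDerivAt.comp_hasDerivAt (f := fun τ => (τ, x)) s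
      ((hasDerivAt_id s).prodMk (hasDerivAt_const s x))).deriv
  have hspace : deriv (fun y => f s y) x = fderiv ℝ (Function.uncurry f) (s, x) (0, 1) :=
    (hf.hasFDerivAt.comp_hasDerivAt (f := fun y => (s, y)) x
      ((hasDerivAt_const x s).prodMk (hasDerivAt_id x))).deriv
  rw [htime, hspace, ← smul_eq_mul, ← map_smul, ← map_add]
  simp

theorem hasDerivAt_uncurry_comp {f : ℝ → ℝ → ℝ} {γ : ℝ → ℝ} {s c : ℝ}
    (hf : DifferentiableAt ℝ (Function.uncurry f) (s, γ s)) (hγ : HasDerivAt γ c s) :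
    HasDerivAt (fun τ => f τ (γ τ)) (fderiv ℝ (Function.uncurry f) (s, γ s) (1, c)) s :=
  hf.hasFDerivAt.comp_hasDerivAt (f := fun τ => (τ, γ τ)) s ((hasDerivAt_id s).prodMk hγ)

end RealFunctions

section IntegralCurves

variable {v : ℝ → ℝ → ℝ} {γ : ℝ → ℝ} {D : Set ℝ}

theorem monotoneOn_of_isIntegralCurveOn (hD : Convex ℝ D) (hv : ∀ s x, 0 ≤ v s x)
    (hγ : IsIntegralCurveOn γ v D) : MonotoneOn γ D :=
  monotoneOn_of_hasDerivWithinAt_nonneg hD hγ.continuousOn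
    (hγ.mono interior_subset) fun s _ => hv s (γ s)

theorem antitoneOn_of_isIntegralCurveOn (hD : Convex ℝ D) (hv : ∀ s x, v s x ≤ 0)
    (hγ : IsIntegralCurveOn γ v D) : AntitoneOn γ D :=
  antitoneOn_of_hasDerivWithinAt_nonpos hD hγ.continuousOn
    (hγ.mono interior_subset) fun s _ => hv s (γ s)

end IntegralCurves

/-- The space-time region between the curves `X` and `Y` up to time `t`. When `X` is a forward and
`Y` a backward characteristic, it is the domain of dependence on which the maximum principle
holds. -/
def dependenceRegion (X Y : ℝ → ℝ) (t : ℝ) : Set (ℝ × ℝ) :=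
  {p | p.1 ∈ Icc 0 t ∧ p.2 ∈ Icc (X p.1) (Y p.1)}

section DependenceRegion

variable {K : ℝ → ℝ → ℝ} {X Y : ℝ → ℝ} {t : ℝ}

theorem isCompact_dependenceRegion (hX : ContinuousOn X (Icc 0 t)) (hY : ContinuousOn Y (Icc 0 t)) :
    IsCompact (dependenceRegion X Y t) := by
  obtain ⟨a, ha⟩ := isCompact_Icc.bddBelow_image hX
  obtain ⟨b, hb⟩ := isCompact_Icc.bddAbove_image hY
  have hbox : IsCompact (Icc 0 t ×ˢ Icc a b) := isCompact_Icc.prod isCompact_Icc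
  have hmaps : MapsTo Prod.fst (Icc 0 t ×ˢ Icc a b) (Icc 0 t) := fun _ hp => hp.1
  have hleft := hbox.isClosed.isClosed_le (hX.comp continuousOn_fst hmaps) continuousOn_snd
  have hright := hbox.isClosed.isClosed_le continuousOn_snd (hY.comp continuousOn_fst hmaps)
  refine hbox.of_isClosed_subset ?_ ?_
  · convert! hleft.inter hright using 1
    ext ⟨s, x⟩
    constructor
    · rintro ⟨hs, hXx, hxY⟩
      have hx : x ∈ Icc a b :=
        ⟨(ha (mem_image_of_mem X hs)).trans hXx, hxY.trans (hb (mem_image_of_mem Y hs))⟩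
      exact ⟨⟨⟨hs, hx⟩, hXx⟩, ⟨hs, hx⟩, hxY⟩
    · rintro ⟨⟨⟨hs, -⟩, hXx⟩, -, hxY⟩
      exact ⟨hs, hXx, hxY⟩
  · rintro ⟨s, x⟩ ⟨hs, hXx, hxY⟩
    exact ⟨hs, (ha (mem_image_of_mem X hs)).trans hXx, hxY.trans (hb (mem_image_of_mem Y hs))⟩

theorem le_of_isIntegralCurveOn_of_le (hK : ∀ s x, 0 ≤ K s x)
    (hX : IsIntegralCurveOn X K (Icc 0 t)) (hY : IsIntegralCurveOn Y (-K) (Icc 0 t))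
    (hXY : X t ≤ Y t) {s : ℝ} (hs : s ∈ Icc 0 t) : X s ≤ Y s := by
  have ht : t ∈ Icc 0 t := right_mem_Icc.2 (hs.1.trans hs.2)
  calc X s ≤ X t := monotoneOn_of_isIntegralCurveOn (convex_Icc 0 t) hK hX hs ht hs.2
    _ ≤ Y t := hXY
    _ ≤ Y s := antitoneOn_of_isIntegralCurveOn (convex_Icc 0 t)
      (fun s x => neg_nonpos.2 (hK s x)) hY hs ht hs.2

-- Lines slower than the characteristics enter the region backwards in time, also from its edges.
theorem neg_mem_posTangentConeAt_dependenceRegion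
    (hX : IsIntegralCurveOn X K (Icc 0 t)) (hY : IsIntegralCurveOn Y (-K) (Icc 0 t))
    {s x : ℝ} (hp : (s, x) ∈ dependenceRegion X Y t) (hs : 0 < s)
    {c : ℝ} (hc : c ∈ Ioo (-K s x) (K s x)) :
    -(1, c) ∈ posTangentConeAt (dependenceRegion X Y t) (s, x) := by
  obtain ⟨hst, hXx, hxY⟩ := hp
  have hline : HasDerivWithinAt (fun τ => x + c * (τ - s)) c (Iio s) s := by
    simpa using ((((hasDerivAt_id s).sub_const s).const_mul c).const_add x).hasDerivWithinAt
  have hIcc : Icc 0 t ∈ 𝓝[<] s :=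
    mem_of_superset (Ioo_mem_nhdsLT hs) fun τ hτ => ⟨hτ.1.le, hτ.2.le.trans hst.2⟩
  have hleft : ∀ᶠ τ in 𝓝[<] s, X τ < x + c * (τ - s) := by
    refine eventually_nhdsLT_lt_of_hasDerivWithinAt ((hX s hst).mono_of_mem_nhdsWithin hIcc) hline
      (by simpa using hXx) fun heq => ?_
    have hxs : X s = x := by simpa using heq
    exact hxs ▸ hc.2
  have hright : ∀ᶠ τ in 𝓝[<] s, x + c * (τ - s) < Y τ := by
    refine eventually_nhdsLT_lt_of_hasDerivWithinAt hline ((hY s hst).mono_of_mem_nhdsWithin hIcc)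
      (by simpa using hxY) fun heq => ?_
    have hxs : x = Y s := by simpa using heq
    exact hxs ▸ hc.1
  have hback : Tendsto (fun h : ℝ => s - h) (𝓝[>] 0) (𝓝[<] s) := by
    refine tendsto_nhdsWithin_iff.2 ⟨?_, ?_⟩
    · exact (Continuous.tendsto' (by fun_prop) 0 s (sub_zero s)).mono_left nhdsWithin_le_nhds
    · filter_upwards [self_mem_nhdsWithin] with h hh using sub_lt_self s hh
  refine mem_posTangentConeAt_of_frequently_mem (Eventually.frequently ?_)
  filter_upwards [hback.eventually hIcc, hback.eventually hleft, hback.eventually hright]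
    with h htime hXh hhY
  have hpoint : (s, x) + h • -((1 : ℝ), c) = (s - h, x + c * (s - h - s)) := by
    ext <;> simp <;> ring
  rw [hpoint]
  exact ⟨htime, hXh.le, hhY.le⟩

theorem le_fderiv_of_isMaxOn_dependenceRegion (hK : ∀ s x, 0 < K s x)
    (hX : IsIntegralCurveOn X K (Icc 0 t)) (hY : IsIntegralCurveOn Y (-K) (Icc 0 t))
    {f : ℝ × ℝ → ℝ} {ε s x : ℝ} (hp : (s, x) ∈ dependenceRegion X Y t) (hs : 0 < s)
    (hf : DifferentiableAt ℝ f (s, x))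
    (hmax : IsMaxOn (fun q => f q - ε * q.1) (dependenceRegion X Y t) (s, x))
    {c : ℝ} (hc : c ∈ Icc (-K s x) (K s x)) : ε ≤ fderiv ℝ f (s, x) (1, c) := by
  have hclosed : IsClosed {c : ℝ | ε ≤ fderiv ℝ f (s, x) (1, c)} :=
    isClosed_le continuous_const (by fun_prop)
  rw [← closure_Ioo (by linarith [hK s x])] at hc
  refine closure_minimal (fun c hc => ?_) hclosed hc
  have hderiv := hf.hasFDerivAt.sub (hasFDerivAt_fst.const_mul ε)
  have hnonpos := hmax.localize.hasFDerivWithinAt_nonpos hderiv.hasFDerivWithinAt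
    (neg_mem_posTangentConeAt_dependenceRegion hX hY hp hs hc)
  rw [map_neg, neg_nonpos] at hnonpos
  simpa using hnonpos

end DependenceRegion

/-- `(r, l)` solves the diagonal system on `[0, T) × ℝ` with damping `lam` and speed field `K`.
The coefficient `k(r - ℓ)` enters as a given function `K` of `(t, x)`, which makes the system
linear. -/
structure IsDiagonalSolution (lam T : ℝ) (K r l : ℝ → ℝ → ℝ) : Prop where
  differentiableOn_r : DifferentiableOn ℝ (Function.uncurry r) (Ico 0 T ×ˢ univ)
  differentiableOn_l : DifferentiableOn ℝ (Function.uncurry l) (Ico 0 T ×ˢ univ)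
  eq_r : ∀ t ∈ Ioo 0 T, ∀ x, deriv (fun s => r s x) t + K t x * deriv (fun y => r t y) x =
    -(lam / 2) * (r t x + l t x)
  eq_l : ∀ t ∈ Ioo 0 T, ∀ x, deriv (fun s => l s x) t - K t x * deriv (fun y => l t y) x =
    -(lam / 2) * (r t x + l t x)

/-- The envelope `A⁻¹ σ + 2 M (1 - A⁻¹)` of `η`, with `A = A(t)`: for `σ = r₀(β) + r₀(α)` it is
`η_L` when `M = r₀(β)` and `η_U` when `M = r₀(α)`. -/
def etaEnvelope (lam t σ M : ℝ) : ℝ :=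
  (Afun lam t)⁻¹ * σ + 2 * M * (1 - (Afun lam t)⁻¹)

namespace IsDiagonalSolution

variable {lam T : ℝ} {K r l : ℝ → ℝ → ℝ}

protected theorem neg (h : IsDiagonalSolution lam T K r l) :
    IsDiagonalSolution lam T K (-r) (-l) where
  differentiableOn_r := h.differentiableOn_r.neg
  differentiableOn_l := h.differentiableOn_l.neg
  eq_r t ht x := by
    simp only [Pi.neg_apply, deriv.fun_neg]
    linarith [h.eq_r t ht x]
  eq_l t ht x := by
    simp only [Pi.neg_apply, deriv.fun_neg]
    linarith [h.eq_l t ht x]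

theorem differentiableAt_r (h : IsDiagonalSolution lam T K r l) {s : ℝ} (hs : s ∈ Ioo 0 T) (x : ℝ) :
    DifferentiableAt ℝ (Function.uncurry r) (s, x) :=
  h.differentiableOn_r.differentiableAt (prod_mem_nhds (Ico_mem_nhds hs.1 hs.2) univ_mem)

theorem differentiableAt_l (h : IsDiagonalSolution lam T K r l) {s : ℝ} (hs : s ∈ Ioo 0 T) (x : ℝ) :
    DifferentiableAt ℝ (Function.uncurry l) (s, x) :=
  h.differentiableOn_l.differentiableAt (prod_mem_nhds (Ico_mem_nhds hs.1 hs.2) univ_mem)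

theorem fderiv_r_apply (h : IsDiagonalSolution lam T K r l) {s : ℝ} (hs : s ∈ Ioo 0 T) (x : ℝ) :
    fderiv ℝ (Function.uncurry r) (s, x) (1, K s x) = -(lam / 2) * (r s x + l s x) := by
  rw [fderiv_uncurry_apply_one (h.differentiableAt_r hs x), h.eq_r s hs x]

theorem fderiv_l_apply (h : IsDiagonalSolution lam T K r l) {s : ℝ} (hs : s ∈ Ioo 0 T) (x : ℝ) :
    fderiv ℝ (Function.uncurry l) (s, x) (1, -K s x) = -(lam / 2) * (r s x + l s x) := by
  rw [fderiv_uncurry_apply_one (h.differentiableAt_l hs x), neg_mul, ← sub_eq_add_neg,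
    h.eq_l s hs x]

section Bounds

variable {X Y : ℝ → ℝ} {t M : ℝ}

-- The penalty `ε * s` makes the inequality at a maximum with positive time strict.
theorem time_eq_zero_of_isMaxOn (h : IsDiagonalSolution lam T K r l) (hlam : 0 ≤ lam)
    (hK : ∀ s x, 0 < K s x) (htT : t < T) (hX : IsIntegralCurveOn X K (Icc 0 t))
    (hY : IsIntegralCurveOn Y (-K) (Icc 0 t)) {ε : ℝ} (hε : 0 < ε) {s x : ℝ}
    (hp : (s, x) ∈ dependenceRegion X Y t)
    (hmax : IsMaxOn (fun q => max (r q.1 q.2) (-l q.1 q.2) - ε * q.1)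
      (dependenceRegion X Y t) (s, x)) : s = 0 := by
  by_contra hs
  have hspos : 0 < s := lt_of_le_of_ne hp.1.1 (Ne.symm hs)
  have hsT : s ∈ Ioo 0 T := ⟨hspos, hp.1.2.trans_lt htT⟩
  have hspeed : -K s x ≤ K s x := by linarith [hK s x]
  have hmax_of_le {f : ℝ × ℝ → ℝ} (hf : ∀ q, f q ≤ max (r q.1 q.2) (-l q.1 q.2))
      (heq : max (r s x) (-l s x) = f (s, x)) :
      IsMaxOn (fun q => f q - ε * q.1) (dependenceRegion X Y t) (s, x) := fun q hq =>
    (sub_le_sub_right (hf q) _).trans ((hmax hq).trans_eq (by simp only [heq]))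
  rcases le_total (-l s x) (r s x) with hle | hle
  · have hε_le : ε ≤ fderiv ℝ (Function.uncurry r) (s, x) (1, K s x) :=
      le_fderiv_of_isMaxOn_dependenceRegion hK hX hY hp hspos (h.differentiableAt_r hsT x)
        (hmax_of_le (fun _ => le_max_left _ _) (max_eq_left hle)) (right_mem_Icc.2 hspeed)
    rw [h.fderiv_r_apply hsT] at hε_le
    nlinarith
  · have hε_le : ε ≤ fderiv ℝ (-Function.uncurry l) (s, x) (1, -K s x) :=
      le_fderiv_of_isMaxOn_dependenceRegion hK hX hY hp hspos (h.differentiableAt_l hsT x).neg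
        (hmax_of_le (fun _ => le_max_right _ _) (max_eq_right hle)) (left_mem_Icc.2 hspeed)
    rw [fderiv_neg, neg_apply, h.fderiv_l_apply hsT] at hε_le
    nlinarith

theorem max_le_of_initial_le (h : IsDiagonalSolution lam T K r l) (hlam : 0 ≤ lam)
    (hK : ∀ s x, 0 < K s x) (htT : t < T) (hX : IsIntegralCurveOn X K (Icc 0 t))
    (hY : IsIntegralCurveOn Y (-K) (Icc 0 t))
    (hinit : ∀ x ∈ Icc (X 0) (Y 0), max (r 0 x) (-l 0 x) ≤ M) {s x : ℝ}
    (hp : (s, x) ∈ dependenceRegion X Y t) : max (r s x) (-l s x) ≤ M := by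
  have hsub : dependenceRegion X Y t ⊆ Ico 0 T ×ˢ univ :=
    fun q hq => ⟨⟨hq.1.1, hq.1.2.trans_lt htT⟩, trivial⟩
  have hpenalized (ε : ℝ) (hε : 0 < ε) : max (r s x) (-l s x) - ε * s ≤ M := by
    have hcont : ContinuousOn (fun q : ℝ × ℝ => max (r q.1 q.2) (-l q.1 q.2) - ε * q.1)
        (dependenceRegion X Y t) :=
      ((h.differentiableOn_r.continuousOn.mono hsub).sup
        (h.differentiableOn_l.continuousOn.mono hsub).neg).sub (by fun_prop)
    obtain ⟨⟨s₀, x₀⟩, hp₀, hmax⟩ :=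
      (isCompact_dependenceRegion hX.continuousOn hY.continuousOn).exists_isMaxOn ⟨_, hp⟩ hcont
    obtain rfl := h.time_eq_zero_of_isMaxOn hlam hK htT hX hY hε hp₀ hmax
    calc max (r s x) (-l s x) - ε * s ≤ max (r 0 x₀) (-l 0 x₀) - ε * 0 := hmax hp
      _ ≤ M := by simpa using hinit x₀ hp₀.2
  have hlim : Tendsto (fun ε => max (r s x) (-l s x) - ε * s) (𝓝[>] 0)
      (𝓝 (max (r s x) (-l s x))) :=
    (Continuous.tendsto' (by fun_prop) 0 _ (by simp)).mono_left nhdsWithin_le_nhds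
  exact le_of_tendsto hlim (eventually_mem_nhdsWithin.mono hpenalized)

theorem antitoneOn_r_along (h : IsDiagonalSolution lam T K r l) (hlam : 0 ≤ lam) (htT : t < T)
    (hX : IsIntegralCurveOn X K (Icc 0 t)) (hl : ∀ s ∈ Icc 0 t, -l s (X s) ≤ M) :
    AntitoneOn (fun s => exp (lam / 2 * s) * (r s (X s) - M)) (Icc 0 t) := by
  have hcont : ContinuousOn (fun s => r s (X s)) (Icc 0 t) :=
    h.differentiableOn_r.continuousOn.comp (continuousOn_id.prodMk hX.continuousOn)
      fun s hs => ⟨⟨hs.1, hs.2.trans_lt htT⟩, trivial⟩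
  refine antitoneOn_exp_mul_sub (convex_Icc 0 t)
    (f' := fun s => -(lam / 2) * (r s (X s) + l s (X s))) hcont ?_ ?_ <;> rw [interior_Icc]
  · intro s hs
    have hsT : s ∈ Ioo 0 T := ⟨hs.1, hs.2.trans htT⟩
    rw [← h.fderiv_r_apply hsT]
    exact hasDerivAt_uncurry_comp (h.differentiableAt_r hsT _)
      ((hX s (Ioo_subset_Icc_self hs)).hasDerivAt (Icc_mem_nhds hs.1 hs.2))
  · intro s hs
    nlinarith [hl s (Ioo_subset_Icc_self hs)]

theorem antitoneOn_neg_l_along (h : IsDiagonalSolution lam T K r l) (hlam : 0 ≤ lam) (htT : t < T)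
    (hY : IsIntegralCurveOn Y (-K) (Icc 0 t)) (hr : ∀ s ∈ Icc 0 t, r s (Y s) ≤ M) :
    AntitoneOn (fun s => exp (lam / 2 * s) * (-l s (Y s) - M)) (Icc 0 t) := by
  have hcont : ContinuousOn (fun s => l s (Y s)) (Icc 0 t) :=
    h.differentiableOn_l.continuousOn.comp (continuousOn_id.prodMk hY.continuousOn)
      fun s hs => ⟨⟨hs.1, hs.2.trans_lt htT⟩, trivial⟩
  refine antitoneOn_exp_mul_sub (convex_Icc 0 t)
    (f' := fun s => -(-(lam / 2) * (r s (Y s) + l s (Y s)))) hcont.neg ?_ ?_ <;> rw [interior_Icc]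
  · intro s hs
    have hsT : s ∈ Ioo 0 T := ⟨hs.1, hs.2.trans htT⟩
    rw [← h.fderiv_l_apply hsT]
    exact (hasDerivAt_uncurry_comp (h.differentiableAt_l hsT _)
      ((hY s (Ioo_subset_Icc_self hs)).hasDerivAt (Icc_mem_nhds hs.1 hs.2))).neg
  · intro s hs
    nlinarith [hr s (Ioo_subset_Icc_self hs)]

theorem sub_le_of_initial_le (h : IsDiagonalSolution lam T K r l) (hlam : 0 ≤ lam)
    (hK : ∀ s x, 0 < K s x) (ht : t ∈ Ico 0 T) (hX : IsIntegralCurveOn X K (Icc 0 t))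
    (hY : IsIntegralCurveOn Y (-K) (Icc 0 t)) (hXY : X t ≤ Y t)
    (hinit : ∀ x ∈ Icc (X 0) (Y 0), max (r 0 x) (-l 0 x) ≤ M) :
    r t (X t) - l t (Y t) ≤ etaEnvelope lam t (r 0 (X 0) - l 0 (Y 0)) M := by
  have hle {s : ℝ} (hs : s ∈ Icc 0 t) : X s ≤ Y s :=
    le_of_isIntegralCurveOn_of_le (fun s x => (hK s x).le) hX hY hXY hs
  have hbound {s x : ℝ} (hp : (s, x) ∈ dependenceRegion X Y t) : max (r s x) (-l s x) ≤ M :=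
    h.max_le_of_initial_le hlam hK ht.2 hX hY hinit hp
  have hr := h.antitoneOn_r_along hlam ht.2 hX
    (fun s hs => (le_max_right _ _).trans (hbound ⟨hs, le_rfl, hle hs⟩))
    (left_mem_Icc.2 ht.1) (right_mem_Icc.2 ht.1) ht.1
  have hl := h.antitoneOn_neg_l_along hlam ht.2 hY
    (fun s hs => (le_max_left _ _).trans (hbound ⟨hs, hle hs, le_rfl⟩))
    (left_mem_Icc.2 ht.1) (right_mem_Icc.2 ht.1) ht.1
  have hA : exp (lam / 2 * t) = Afun lam t := congrArg exp (by ring)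
  have hApos : 0 < Afun lam t := exp_pos _
  simp only [hA, mul_zero, exp_zero, one_mul] at hr hl
  calc r t (X t) - l t (Y t)
      = (Afun lam t)⁻¹ * (Afun lam t * (r t (X t) - M) + Afun lam t * (-l t (Y t) - M))
          + 2 * M := by
        field_simp
        ring
    _ ≤ (Afun lam t)⁻¹ * ((r 0 (X 0) - M) + (-l 0 (Y 0) - M)) + 2 * M := by gcongr
    _ = etaEnvelope lam t (r 0 (X 0) - l 0 (Y 0)) M := by unfold etaEnvelope; ring

theorem le_sub_of_le_initial (h : IsDiagonalSolution lam T K r l) (hlam : 0 ≤ lam)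
    (hK : ∀ s x, 0 < K s x) (ht : t ∈ Ico 0 T) (hX : IsIntegralCurveOn X K (Icc 0 t))
    (hY : IsIntegralCurveOn Y (-K) (Icc 0 t)) (hXY : X t ≤ Y t)
    (hinit : ∀ x ∈ Icc (X 0) (Y 0), M ≤ min (r 0 x) (-l 0 x)) :
    etaEnvelope lam t (r 0 (X 0) - l 0 (Y 0)) M ≤ r t (X t) - l t (Y t) := by
  have hneg := h.neg.sub_le_of_initial_le (M := -M) hlam hK ht hX hY hXY fun x hx => by
    have := le_min_iff.1 (hinit x hx)
    exact max_le (neg_le_neg this.1) (neg_le_neg this.2)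
  simp only [etaEnvelope, Pi.neg_apply] at hneg ⊢
  linarith

end Bounds

end IsDiagonalSolution

theorem kfun_pos (η : ℝ) : 0 < kfun η := Real.sqrt_pos.2 (by positivity)

theorem eta_confined_along_forward_characteristic_general
    {lam T t α β : ℝ} (hlam : 0 ≤ lam) {K r l : ℝ → ℝ → ℝ} (hK : ∀ s x, 0 < K s x)
    (h : IsDiagonalSolution lam T K r l) {r₀ : ℝ → ℝ} (hr0 : ∀ x, r 0 x = r₀ x)
    (hl0 : ∀ x, l 0 x = -r₀ x) (ht : t ∈ Ico 0 T) {X Y : ℝ → ℝ}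
    (hX : IsIntegralCurveOn X K (Icc 0 t)) (hX0 : X 0 = α)
    (hY : IsIntegralCurveOn Y (-K) (Icc 0 t)) (hY0 : Y 0 = β) (hmeet : X t = Y t) :
    (AntitoneOn r₀ (Icc α β) → etafun r l t (X t) ∈
      Icc (etaEnvelope lam t (r₀ β + r₀ α) (r₀ β)) (etaEnvelope lam t (r₀ β + r₀ α) (r₀ α))) ∧
    (MonotoneOn r₀ (Icc α β) → etafun r l t (X t) ∈
      Icc (etaEnvelope lam t (r₀ β + r₀ α) (r₀ α)) (etaEnvelope lam t (r₀ β + r₀ α) (r₀ β))) := by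
  have hαβ : α ≤ β := hX0 ▸ hY0 ▸ le_of_isIntegralCurveOn_of_le (fun s x => (hK s x).le) hX hY
    hmeet.le (left_mem_Icc.2 ht.1)
  have hη {m M : ℝ} (hr₀ : ∀ x ∈ Icc α β, r₀ x ∈ Icc m M) :
      etafun r l t (X t) ∈
        Icc (etaEnvelope lam t (r₀ β + r₀ α) m) (etaEnvelope lam t (r₀ β + r₀ α) M) := by
    have hlow := h.le_sub_of_le_initial (M := m) hlam hK ht hX hY hmeet.le
      (by simpa [hX0, hY0, hr0, hl0] using fun x hαx hxβ => (hr₀ x ⟨hαx, hxβ⟩).1)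
    have hup := h.sub_le_of_initial_le (M := M) hlam hK ht hX hY hmeet.le
      (by simpa [hX0, hY0, hr0, hl0] using fun x hαx hxβ => (hr₀ x ⟨hαx, hxβ⟩).2)
    rw [← hmeet, hX0, hY0, hr0, hl0, sub_neg_eq_add, add_comm (r₀ α)] at hlow hup
    exact ⟨hlow, hup⟩
  exact ⟨fun hanti => hη fun x hx =>
      ⟨hanti hx (right_mem_Icc.2 hαβ) hx.2, hanti (left_mem_Icc.2 hαβ) hx hx.1⟩,
    fun hmono => hη fun x hx =>
      ⟨hmono (left_mem_Icc.2 hαβ) hx hx.1, hmono hx (right_mem_Icc.2 hαβ) hx.2⟩⟩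

/-- along the forward characteristic `x₁(·,α)`, the function
`η = r − ℓ` is confined between `η_L(t,α)` and `η_U(t,α)`. -/
theorem eta_confined_along_forward_characteristic
    (lam T : ℝ) (hlam : 0 < lam)
    (r l : ℝ → ℝ → ℝ) (r₀ : ℝ → ℝ) (rinf : ℝ)
    (hreg_r : ContDiffOn ℝ 1 (Function.uncurry r) (Set.Ico 0 T ×ˢ (Set.univ : Set ℝ)))
    (hreg_l : ContDiffOn ℝ 1 (Function.uncurry l) (Set.Ico 0 T ×ˢ (Set.univ : Set ℝ)))
    (hsys_r : ∀ t ∈ Set.Ico (0:ℝ) T, ∀ x : ℝ,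
      deriv (fun s => r s x) t + kfun (etafun r l t x) * deriv (fun y => r t y) x
        = -(lam/2) * (r t x + l t x))
    (hsys_l : ∀ t ∈ Set.Ico (0:ℝ) T, ∀ x : ℝ,
      deriv (fun s => l s x) t - kfun (etafun r l t x) * deriv (fun y => l t y) x
        = -(lam/2) * (r t x + l t x))
    (hr0 : ∀ x : ℝ, r 0 x = r₀ x)
    (hl0 : ∀ x : ℝ, l 0 x = -r₀ x)
    (hr₀reg : ContDiff ℝ 1 r₀)
    (hr₀bdd : ∃ C : ℝ, ∀ x : ℝ, |r₀ x| ≤ C)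
    (hrinf : Filter.Tendsto r₀ Filter.atTop (nhds rinf))
    (hetabdd : ∀ t ∈ Set.Ico (0:ℝ) T, ∀ x y : ℝ,
      |r t x - l t y| ≤ 2 * ⨆ z : ℝ, |r₀ z|)
    -- the forward characteristic starting from α and the backward characteristic flow
    (α : ℝ) (x₁ : ℝ → ℝ) (x₂ : ℝ → ℝ → ℝ)
    (hx₁0 : x₁ 0 = α)
    (hx₁ : ∀ t ∈ Set.Ico (0:ℝ) T,
      HasDerivAt x₁ (kfun (etafun r l t (x₁ t))) t)
    (hflowreg₂ : ContDiffOn ℝ 1 (Function.uncurry x₂) (Set.Ico 0 T ×ˢ (Set.univ : Set ℝ)))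
    (hx₂0 : ∀ b : ℝ, x₂ 0 b = b)
    (hx₂ : ∀ b : ℝ, ∀ t ∈ Set.Ico (0:ℝ) T,
      HasDerivAt (fun s => x₂ s b) (-(kfun (etafun r l t (x₂ t b)))) t)
    -- the correspondence map t ↦ β(t,α)
    (bmap : ℝ → ℝ)
    (hbmapreg : ContDiffOn ℝ 1 bmap (Set.Ico 0 T))
    (hbmap : ∀ t ∈ Set.Ico (0:ℝ) T, x₁ t = x₂ t (bmap t))
    -- conditions (69) on the initial profile at α
    (hcond₁ : deriv r₀ α * (r₀ α + rinf) < 0)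
    (hcond₂ : ∀ x : ℝ, α ≤ x → deriv r₀ x * r₀ α < 0)
    -- the confining functions η_L and η_U
    (etaL etaU : ℝ → ℝ)
    (hetaL : ∀ t : ℝ, etaL t = (Afun lam t)⁻¹ * (r₀ (bmap t) + r₀ α)
      + 2 * r₀ (bmap t) * (1 - (Afun lam t)⁻¹))
    (hetaU : ∀ t : ℝ, etaU t = (Afun lam t)⁻¹ * (r₀ (bmap t) + r₀ α)
      + 2 * r₀ α * (1 - (Afun lam t)⁻¹)) :
    ∀ t ∈ Set.Ico (0:ℝ) T,
      (0 < r₀ α → etaL t ≤ etafun r l t (x₁ t) ∧ etafun r l t (x₁ t) ≤ etaU t) ∧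
      (r₀ α < 0 → etaU t ≤ etafun r l t (x₁ t) ∧ etafun r l t (x₁ t) ≤ etaL t) := by
  intro t ht
  have hsub : Icc 0 t ⊆ Ico 0 T := Icc_subset_Ico_right ht.2
  have hsol : IsDiagonalSolution lam T (fun s x => kfun (etafun r l s x)) r l :=
    ⟨hreg_r.differentiableOn one_ne_zero, hreg_l.differentiableOn one_ne_zero,
      fun s hs => hsys_r s (Ioo_subset_Ico_self hs), fun s hs => hsys_l s (Ioo_subset_Ico_self hs)⟩
  have hdiff : Differentiable ℝ r₀ := hr₀reg.differentiable one_ne_zero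
  obtain ⟨hanti, hmono⟩ := eta_confined_along_forward_characteristic_general hlam.le
    (fun _ _ => kfun_pos _) hsol hr0 hl0 ht (fun s hs => (hx₁ s (hsub hs)).hasDerivWithinAt) hx₁0
    (fun s hs => (hx₂ (bmap t) s (hsub hs)).hasDerivWithinAt) (hx₂0 (bmap t)) (hbmap t ht)
  rw [hetaL, hetaU]
  exact ⟨fun hpos => hanti
      (antitoneOn_of_deriv_mul_neg (convex_Icc _ _) hdiff hpos fun x hx => hcond₂ x hx.1),
    fun hneg => hmono
      (monotoneOn_of_deriv_mul_neg (convex_Icc _ _) hdiff hneg fun x hx => hcond₂ x hx.1)⟩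
end
end
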